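/- arXiv:2402.18111 — 3 statements merged into one kernel-verified Lean document; each statement's English description precedes it below -/
import Mathlib

section
/- There exists an absolute constant C > 0 such that for every (r, s) ∈ Π with r² + s² = 1 and every (r̄, s̄) ∈ Π with 0 < D ≤ 1/64, where D := (r − r̄)² + (s − s̄)², one has |F^r(r, s, r̄, s̄)| ≤ C · D^{−1/2}. -/
open MeasureTheory Real

/-- `X₋₋(r,s,r̄,s̄,θ̄,φ̄) = (r−r̄)² + (s−s̄)² + 2rr̄(1−cos θ̄) + 2ss̄(1−cos φ̄)`. -/
noncomputable def Xmm (r s rb sb θ φ : ℝ) : ℝ :=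
  (r - rb) ^ 2 + (s - sb) ^ 2 + 2 * r * rb * (1 - Real.cos θ) + 2 * s * sb * (1 - Real.cos φ)

/-- The Biot–Savart kernel `F^r` of the bi-rotational Euler flow:
`F^r(r,s,r̄,s̄) = (2/π²) ∫₀^π ∫₀^π r̄ s̄ cos θ̄ (s̄ − s cos φ̄) X₋₋^{−2} dφ̄ dθ̄`. -/
noncomputable def Fr (r s rb sb : ℝ) : ℝ :=
  (2 / Real.pi ^ 2) * ∫ θ in (0:ℝ)..Real.pi, ∫ φ in (0:ℝ)..Real.pi,
    rb * sb * Real.cos θ * (sb - s * Real.cos φ) / (Xmm r s rb sb θ φ) ^ 2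

/-!
Put `d = √D`. In each angle separately, `X₋₋` dominates `d² + 2xy(1 − cos θ)`, where `(x, y)` is
`(r, r̄)` or `(s, s̄)`. In the numerator `|s̄ − s cos φ̄| ≤ d + s(1 − cos φ̄)`, and
`s s̄(1 − cos φ̄) ≤ X₋₋ / 2`. Spending one factor `X₋₋⁻¹` on each angle therefore bounds the
integrand by a function of `θ̄` times a function of `φ̄`. Both are controlled by the identity
`∫₀^π dθ / (a − b cos θ) = π / √(a² − b²)`: for `a = d² + 2xy` and `b = 2xy` the radicand is
`d²(d² + 4xy)`, and `d² + 4xy ≥ (x + y)²` because `|x − y| ≤ d`.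
-/

section TrigonometricIntegral

variable {a b : ℝ}

lemma sq_sub_sq_pos_of_abs_lt (hab : |b| < a) : 0 < a ^ 2 - b ^ 2 :=
  sub_pos.mpr (sq_lt_sq' (abs_lt.mp hab).1 (abs_lt.mp hab).2)

lemma sub_mul_cos_pos (hab : |b| < a) (θ : ℝ) : 0 < a - b * cos θ := by
  have : b * cos θ ≤ |b| :=
    calc b * cos θ ≤ |b * cos θ| := le_abs_self _
      _ = |b| * |cos θ| := abs_mul b (cos θ)
      _ ≤ |b| := mul_le_of_le_one_right (abs_nonneg b) (abs_cos_le_one θ)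
  linarith

lemma hasDerivAt_arctan_mul_tan_half (hab : |b| < a) {θ : ℝ} (hθ : cos (θ / 2) ≠ 0) :
    HasDerivAt
      (fun t => 2 / √(a ^ 2 - b ^ 2) * arctan (√(a ^ 2 - b ^ 2) / (a - b) * tan (t / 2)))
      (1 / (a - b * cos θ)) θ := by
  have hba : 0 < a - b := by linarith [le_abs_self b]
  have hradicand := sq_sub_sq_pos_of_abs_lt hab
  have := sqrt_pos.mpr hradicand
  have hw_sq : √(a ^ 2 - b ^ 2) ^ 2 = a ^ 2 - b ^ 2 := sq_sqrt hradicand.le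
  have hdenom : a - b * cos θ = (a - b) * cos (θ / 2) ^ 2 + (a + b) * sin (θ / 2) ^ 2 := by
    rw [← mul_div_cancel₀ θ (two_ne_zero' ℝ), cos_two_mul', mul_div_cancel_left₀ _ (two_ne_zero' ℝ)]
    linear_combination -a * sin_sq_add_cos_sq (θ / 2)
  have hpos := sub_mul_cos_pos hab θ
  have htan : HasDerivAt (fun t => tan (t / 2)) (1 / cos (θ / 2) ^ 2 * (1 / 2)) θ :=
    HasDerivAt.comp θ (h₂ := tan) (hasDerivAt_tan hθ) ((hasDerivAt_id' θ).div_const 2)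
  have hone_add : 1 + (√(a ^ 2 - b ^ 2) / (a - b) * tan (θ / 2)) ^ 2 =
      (a - b * cos θ) / ((a - b) * cos (θ / 2) ^ 2) := by
    rw [hdenom, tan_eq_sin_div_cos, mul_pow, div_pow, hw_sq, div_pow]
    field_simp
    ring
  refine ((htan.const_mul _).arctan.const_mul _).congr_deriv ?_
  rw [hone_add]
  field_simp

open Filter Topology in
lemma integral_one_div_sub_mul_cos (hab : |b| < a) :
    ∫ θ in (0 : ℝ)..π, 1 / (a - b * cos θ) = π / √(a ^ 2 - b ^ 2) := by
  have hba : 0 < a - b := by linarith [le_abs_self b]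
  have hw : 0 < √(a ^ 2 - b ^ 2) := sqrt_pos.mpr (sq_sub_sq_pos_of_abs_lt hab)
  have hcos (θ : ℝ) (hθ : θ ∈ Set.Ioo (-π) π) : cos (θ / 2) ≠ 0 :=
    (cos_pos_of_mem_Ioo ⟨by linarith [hθ.1], by linarith [hθ.2]⟩).ne'
  have hintegrable : IntervalIntegrable (fun θ => 1 / (a - b * cos θ)) volume 0 π :=
    Continuous.intervalIntegrable
      (continuous_const.div (by fun_prop) fun θ => (sub_mul_cos_pos hab θ).ne') 0 π
  have hhalf : Tendsto (fun θ : ℝ => θ / 2) (𝓝[<] π) (𝓝[<] (π / 2)) :=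
    tendsto_nhdsWithin_iff.mpr ⟨(continuous_id.div_const 2).continuousWithinAt,
      eventually_mem_nhdsWithin.mono fun θ (hθ : θ < π) =>
        show θ / 2 < π / 2 from div_lt_div_of_pos_right hθ two_pos⟩
  have hlim_zero := (hasDerivAt_arctan_mul_tan_half hab
    (hcos 0 ⟨neg_lt_zero.mpr pi_pos, pi_pos⟩)).continuousAt.tendsto.mono_left
      (nhdsWithin_le_nhds (s := Set.Ioi 0))
  have hlim_pi := ((tendsto_arctan_atTop.mono_right nhdsWithin_le_nhds).comp
    ((tendsto_tan_pi_div_two.comp hhalf).const_mul_atTop (div_pos hw hba))).const_mul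
      (2 / √(a ^ 2 - b ^ 2))
  -- At `π` the primitive has a junk value, since `tan (π / 2) = 0`: only its left limit is right.
  rw [intervalIntegral.integral_eq_sub_of_hasDerivAt_of_tendsto pi_pos
    (fun θ hθ => hasDerivAt_arctan_mul_tan_half hab (hcos θ ⟨by linarith [hθ.1, pi_pos], hθ.2⟩))
    hintegrable hlim_zero hlim_pi]
  simp only [zero_div, tan_zero, mul_zero, arctan_zero, sub_zero]
  field_simp

end TrigonometricIntegral

lemma norm_integral_integral_le_mul {E : Type*} [NormedAddCommGroup E] [NormedSpace ℝ E]
    {μ ν : Measure ℝ} {f : ℝ → ℝ → E} {g h : ℝ → ℝ} {a b c d : ℝ} (hab : a ≤ b) (hcd : c ≤ d)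
    (hg : IntervalIntegrable g μ a b) (hh : IntervalIntegrable h ν c d)
    (hf : ∀ x ∈ Set.Ioc a b, ∀ y ∈ Set.Ioc c d, ‖f x y‖ ≤ g x * h y) :
    ‖∫ x in a..b, ∫ y in c..d, f x y ∂ν ∂μ‖ ≤ (∫ x in a..b, g x ∂μ) * ∫ y in c..d, h y ∂ν := by
  have hinner (x : ℝ) (hx : x ∈ Set.Ioc a b) :
      ‖∫ y in c..d, f x y ∂ν‖ ≤ g x * ∫ y in c..d, h y ∂ν := by
    rw [← intervalIntegral.integral_const_mul]
    exact intervalIntegral.norm_integral_le_of_norm_le hcd (.of_forall (hf x hx)) (hh.const_mul _)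
  rw [← intervalIntegral.integral_mul_const]
  exact intervalIntegral.norm_integral_le_of_norm_le hab (.of_forall hinner) (hg.mul_const _)

/-- The kernel `y / (d² + 2xy(1 − cos θ))`, one factor of the majorant of the integrand of `F^r`.
For `d = |x − y|` its denominator is the squared chord `|x − y e^{iθ}|²`. -/
noncomputable def chordKernel (d x y θ : ℝ) : ℝ :=
  y / (d ^ 2 + 2 * x * y * (1 - cos θ))

section ChordKernel

variable {d x y : ℝ}

lemma chordKernel_denom_pos (hd : 0 < d) (hx : 0 ≤ x) (hy : 0 ≤ y) (θ : ℝ) :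
    0 < d ^ 2 + 2 * x * y * (1 - cos θ) := by
  have := sub_nonneg.mpr (cos_le_one θ)
  positivity

lemma chordKernel_nonneg (hd : 0 < d) (hx : 0 ≤ x) (hy : 0 ≤ y) (θ : ℝ) :
    0 ≤ chordKernel d x y θ :=
  div_nonneg hy (chordKernel_denom_pos hd hx hy θ).le

lemma continuous_chordKernel (hd : 0 < d) (hx : 0 ≤ x) (hy : 0 ≤ y) :
    Continuous (chordKernel d x y) :=
  continuous_const.div (by fun_prop) fun θ => (chordKernel_denom_pos hd hx hy θ).ne'

lemma div_le_chordKernel {X θ : ℝ} (hd : 0 < d) (hx : 0 ≤ x) (hy : 0 ≤ y)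
    (hX : d ^ 2 + 2 * x * y * (1 - cos θ) ≤ X) : y / X ≤ chordKernel d x y θ :=
  div_le_div_of_nonneg_left hy (chordKernel_denom_pos hd hx hy θ) hX

lemma integral_chordKernel (hd : 0 < d) (hx : 0 ≤ x) (hy : 0 ≤ y) :
    ∫ θ in (0 : ℝ)..π, chordKernel d x y θ = π * y / (d * √(d ^ 2 + 4 * x * y)) := by
  have hxy : 0 ≤ 2 * x * y := by positivity
  have hab : |2 * x * y| < d ^ 2 + 2 * x * y := by
    rw [abs_of_nonneg hxy]
    exact lt_add_of_pos_left _ (pow_pos hd 2)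
  have hsqrt : √((d ^ 2 + 2 * x * y) ^ 2 - (2 * x * y) ^ 2) = d * √(d ^ 2 + 4 * x * y) := by
    rw [← sqrt_sq hd.le, ← sqrt_mul (sq_nonneg d), sqrt_sq hd.le]
    ring_nf
  calc ∫ θ in (0 : ℝ)..π, chordKernel d x y θ
      = ∫ θ in (0 : ℝ)..π, y * (1 / (d ^ 2 + 2 * x * y - 2 * x * y * cos θ)) :=
        intervalIntegral.integral_congr fun θ _ => by
          simp only [chordKernel]
          ring_nf
    _ = π * y / (d * √(d ^ 2 + 4 * x * y)) := by
        rw [intervalIntegral.integral_const_mul, integral_one_div_sub_mul_cos hab, hsqrt]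
        ring

lemma integral_chordKernel_le (hd : 0 < d) (hx : 0 ≤ x) (hy : 0 ≤ y) (hxy : (x - y) ^ 2 ≤ d ^ 2) :
    ∫ θ in (0 : ℝ)..π, chordKernel d x y θ ≤ π / d := by
  have hsqrt : 0 < √(d ^ 2 + 4 * x * y) := by positivity
  have hy_le : y ≤ √(d ^ 2 + 4 * x * y) := le_sqrt_of_sq_le (by nlinarith [mul_nonneg hx hy])
  calc ∫ θ in (0 : ℝ)..π, chordKernel d x y θ
      = π / d * (y / √(d ^ 2 + 4 * x * y)) := by
        rw [integral_chordKernel hd hx hy, mul_div_mul_comm]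
    _ ≤ π / d := mul_le_of_le_one_right (by positivity) ((div_le_one hsqrt).mpr hy_le)

lemma integral_mul_chordKernel_add_const_le (hd : 0 < d) (hx : 0 ≤ x) (hy : 0 ≤ y)
    (hxy : (x - y) ^ 2 ≤ d ^ 2) (c : ℝ) :
    ∫ θ in (0 : ℝ)..π, (d * chordKernel d x y θ + c) ≤ π * (1 + c) := by
  have hintegrable := (continuous_chordKernel hd hx hy).intervalIntegrable (μ := volume) 0 π
  calc ∫ θ in (0 : ℝ)..π, (d * chordKernel d x y θ + c)
      = d * (∫ θ in (0 : ℝ)..π, chordKernel d x y θ) + π * c := by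
        rw [intervalIntegral.integral_add (hintegrable.const_mul d) intervalIntegrable_const,
          intervalIntegral.integral_const_mul, intervalIntegral.integral_const, smul_eq_mul,
          sub_zero]
    _ ≤ d * (π / d) + π * c := by
        gcongr
        exact integral_chordKernel_le hd hx hy hxy
    _ = π * (1 + c) := by
        field_simp

end ChordKernel

lemma abs_sub_mul_cos_le {x y d : ℝ} (hx : 0 ≤ x) (hxy : |x - y| ≤ d) (θ : ℝ) :
    |y - x * cos θ| ≤ d + x * (1 - cos θ) := by
  have hcos : 0 ≤ x * (1 - cos θ) := mul_nonneg hx (sub_nonneg.mpr (cos_le_one θ))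
  calc |y - x * cos θ| = |(y - x) + x * (1 - cos θ)| := by ring_nf
    _ ≤ |y - x| + |x * (1 - cos θ)| := abs_add_le _ _
    _ = |x - y| + x * (1 - cos θ) := by rw [abs_sub_comm, abs_of_nonneg hcos]
    _ ≤ d + x * (1 - cos θ) := by gcongr

section Kernel

variable {r s rb sb d : ℝ}

lemma abs_Fr_integrand_le (hr : 0 ≤ r) (hs : 0 ≤ s) (hrb : 0 ≤ rb) (hsb : 0 ≤ sb) (hd : 0 < d)
    (hD : d ^ 2 = (r - rb) ^ 2 + (s - sb) ^ 2) (θ φ : ℝ) :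
    |rb * sb * cos θ * (sb - s * cos φ) / (Xmm r s rb sb θ φ) ^ 2| ≤
      chordKernel d r rb θ * (d * chordKernel d s sb φ + 1 / 2) := by
  have hcosφ : 0 ≤ 1 - cos φ := sub_nonneg.mpr (cos_le_one φ)
  have hangθ : 0 ≤ 2 * r * rb * (1 - cos θ) :=
    mul_nonneg (by positivity) (sub_nonneg.mpr (cos_le_one θ))
  have hangφ : 0 ≤ 2 * s * sb * (1 - cos φ) := by positivity
  have hX : Xmm r s rb sb θ φ = d ^ 2 + 2 * r * rb * (1 - cos θ) + 2 * s * sb * (1 - cos φ) := by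
    rw [Xmm, hD]
  set X := Xmm r s rb sb θ φ
  have hXpos : 0 < X := by rw [hX]; positivity
  have hrX : rb / X ≤ chordKernel d r rb θ := div_le_chordKernel hd hr hrb (by linarith)
  have hsX : sb / X ≤ chordKernel d s sb φ := div_le_chordKernel hd hs hsb (by linarith)
  have hang : s * sb * (1 - cos φ) / X ≤ 1 / 2 := by
    rw [div_le_div_iff₀ hXpos two_pos]
    linarith [sq_nonneg d]
  have hnum : |sb - s * cos φ| ≤ d + s * (1 - cos φ) :=
    abs_sub_mul_cos_le hs (abs_le_of_sq_le_sq (by linarith [sq_nonneg (r - rb)]) hd.le) φ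
  calc |rb * sb * cos θ * (sb - s * cos φ) / X ^ 2|
      = rb * sb * |cos θ| * |sb - s * cos φ| / X ^ 2 := by
        rw [abs_div, abs_mul, abs_mul, abs_of_nonneg (mul_nonneg hrb hsb),
          abs_of_pos (pow_pos hXpos 2)]
    _ ≤ rb * sb * 1 * (d + s * (1 - cos φ)) / X ^ 2 := by
        gcongr
        exact abs_cos_le_one θ
    _ = rb / X * (d * (sb / X) + s * sb * (1 - cos φ) / X) := by
        field_simp
    _ ≤ chordKernel d r rb θ * (d * chordKernel d s sb φ + 1 / 2) := by
        have := chordKernel_nonneg hd hr hrb θ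
        gcongr

lemma abs_Fr_le (hr : 0 ≤ r) (hs : 0 ≤ s) (hrb : 0 ≤ rb) (hsb : 0 ≤ sb) (hd : 0 < d)
    (hD : d ^ 2 = (r - rb) ^ 2 + (s - sb) ^ 2) : |Fr r s rb sb| ≤ 3 * d⁻¹ := by
  have hr_sq : (r - rb) ^ 2 ≤ d ^ 2 := by linarith [sq_nonneg (s - sb)]
  have hs_sq : (s - sb) ^ 2 ≤ d ^ 2 := by linarith [sq_nonneg (r - rb)]
  have hθcont := continuous_chordKernel hd hr hrb
  have hφcont := ((continuous_chordKernel hd hs hsb).const_mul d).add_const (1 / 2)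
  have hφ_nonneg : 0 ≤ ∫ φ in (0 : ℝ)..π, (d * chordKernel d s sb φ + 1 / 2) :=
    intervalIntegral.integral_nonneg pi_pos.le fun φ _ => by
      have := chordKernel_nonneg hd hs hsb φ
      positivity
  have hseparated := norm_integral_integral_le_mul pi_pos.le pi_pos.le
    (hθcont.intervalIntegrable (μ := volume) 0 π) (hφcont.intervalIntegrable (μ := volume) 0 π)
    fun θ _ φ _ => (norm_eq_abs _).trans_le (abs_Fr_integrand_le hr hs hrb hsb hd hD θ φ)
  rw [Fr, abs_mul, abs_of_pos (by positivity)]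
  calc _ ≤ 2 / π ^ 2 * (π / d * (π * (1 + 1 / 2))) := by
        gcongr
        exact hseparated.trans (mul_le_mul (integral_chordKernel_le hd hr hrb hr_sq)
          (integral_mul_chordKernel_add_const_le hd hs hsb hs_sq _) hφ_nonneg (by positivity))
    _ = 3 * d⁻¹ := by
        field_simp
        norm_num

theorem stmt_3_general (hr : 0 ≤ r) (hs : 0 ≤ s) (hrb : 0 ≤ rb) (hsb : 0 ≤ sb)
    (hD : 0 < (r - rb) ^ 2 + (s - sb) ^ 2) :
    |Fr r s rb sb| ≤ 3 * ((r - rb) ^ 2 + (s - sb) ^ 2) ^ (-(1 : ℝ) / 2) := by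
  rw [neg_div, rpow_neg hD.le, ← sqrt_eq_rpow]
  exact abs_Fr_le hr hs hrb hsb (sqrt_pos.mpr hD) (sq_sqrt hD.le)

end Kernel

/-- There is an absolute constant `C > 0` such that for every `(r,s) ∈ Π`
with `r² + s² = 1` and every `(r̄,s̄) ∈ Π` with `0 < D ≤ 1/64`, where
`D = (r−r̄)² + (s−s̄)²`, one has `|F^r(r,s,r̄,s̄)| ≤ C · D^{−1/2}`. -/
theorem stmt_3 :
    ∃ C : ℝ, 0 < C ∧ ∀ r s rb sb : ℝ, 0 ≤ r → 0 ≤ s → r ^ 2 + s ^ 2 = 1 →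
      0 ≤ rb → 0 ≤ sb →
      0 < (r - rb) ^ 2 + (s - sb) ^ 2 → (r - rb) ^ 2 + (s - sb) ^ 2 ≤ 1 / 64 →
      |Fr r s rb sb| ≤ C * ((r - rb) ^ 2 + (s - sb) ^ 2) ^ (-(1:ℝ)/2) :=
  ⟨3, by norm_num, fun r s rb sb hr hs _ hrb hsb hD _ => stmt_3_general hr hs hrb hsb hD⟩
end

section
/- There exists an absolute constant C > 0 with the following property. Let w : Π → ℝ be measurable, N ≥ 0, I ≥ 0, and suppose |w(r̄, s̄)| ≤ N r̄ s̄ for almost every (r̄, s̄) ∈ Π and ∫∫_Π (r̄² + s̄²) |w(r̄, s̄)| dr̄ ds̄ = I < ∞. Then for every (r, s) ∈ Π, the integrals defining u^r[w](r, s) and u^s[w](r, s) converge absolutely and sup_{(r,s) ∈ Π} max{ |u^r[w](r, s)|, |u^s[w](r, s)| } ≤ C I^{1/2} N^{1/2}. -/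
open MeasureTheory Real

/-- `F^s(r,s,r̄,s̄) = F^r(s,r,s̄,r̄)`. -/
noncomputable def Fs (r s rb sb : ℝ) : ℝ := Fr s r sb rb

/-- The quadrant `Π = {(r,s) : r ≥ 0, s ≥ 0}`. -/
def quadrant : Set (ℝ × ℝ) := Set.Ici (0:ℝ) ×ˢ Set.Ici (0:ℝ)

/-- `u^r[w](r,s) = −∫∫_Π F^r(r,s,r̄,s̄) w(r̄,s̄) ds̄ dr̄`. -/
noncomputable def uR (w : ℝ × ℝ → ℝ) (r s : ℝ) : ℝ :=
  -∫ p in quadrant, Fr r s p.1 p.2 * w p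

/-- `u^s[w](r,s) = ∫∫_Π F^s(r,s,r̄,s̄) w(r̄,s̄) ds̄ dr̄`. -/
noncomputable def uS (w : ℝ × ℝ → ℝ) (r s : ℝ) : ℝ :=
  ∫ p in quadrant, Fs r s p.1 p.2 * w p

/-!
Since `X₋₋ ≳ (dist + r̄ θ̄ + s̄ φ̄)²`, with `dist` the distance from `(r, s)` to `(r̄, s̄)`, and
`|s̄ - s cos φ̄| ≤ √X₋₋`, integrating in both angles shows that the kernels are `O(1 / dist)`.
The rest is an interpolation valid in any dimension `d`: if `|f| ≤ N ‖p‖ ^ a` and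
`∫ ‖p‖ ^ a |f| ≤ I`, then the potential of `f` with kernel `‖p - x‖ ^ (-d / 2)` is at most
`N ∫ ‖p‖ ^ a ‖p - x‖ ^ (-d / 2)` on the sublevel set `‖p‖ ^ a ‖p - x‖ ^ (d / 2) < t`, and at most
`I / t` off it. The first integral is `O(t)` uniformly in `x`: where `‖p‖` is comparable to `‖x‖`
the weight is constant up to a factor, and elsewhere `‖p - x‖ ≳ ‖p‖`. Choosing the best `t` gives
`O(√(N I))`.
-/

open Metric Set
open scoped ENNReal NNReal

section Interpolation

lemma le_two_mul_sqrt_of_forall_le_mul_add_div {T : ℝ≥0∞} {a b : ℝ≥0}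
    (h : ∀ t : ℝ≥0, 0 < t → T ≤ a * t + b / t) : T ≤ 2 * NNReal.sqrt (a * b) := by
  have hT : T ≠ ∞ := ne_top_of_le_ne_top (by simp) (h 1 one_pos)
  lift T to ℝ≥0 using hT
  have hquad : ∀ t : ℝ, 0 ≤ (a : ℝ) * (t * t) + (-T : ℝ) * t + b := by
    intro t
    rcases le_or_gt t 0 with ht | ht
    · have : (0 : ℝ) ≤ T * (-t) := mul_nonneg T.2 (neg_nonneg.2 ht)
      have : (0 : ℝ) ≤ a * (t * t) := mul_nonneg a.2 (mul_self_nonneg t)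
      linarith [b.2]
    · lift t to ℝ≥0 using ht.le
      have hle : T ≤ a * t + b / t := by
        have := h t (by exact_mod_cast ht)
        rw [← ENNReal.coe_div (by exact_mod_cast ht.ne')] at this
        exact_mod_cast this
      have hle' : (T : ℝ) ≤ a * t + b / t := by exact_mod_cast hle
      have := mul_le_mul_of_nonneg_right hle' ht.le
      rw [add_mul, div_mul_cancel₀ _ ht.ne'] at this
      linarith
  have hdiscrim := discrim_le_zero hquad
  rw [discrim, neg_sq] at hdiscrim
  have : (T : ℝ) ≤ 2 * √(a * b) := by
    rw [← Real.sqrt_sq (zero_le_two (α := ℝ)), ← Real.sqrt_mul (by positivity)]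
    exact Real.le_sqrt_of_sq_le (by linarith)
  rw [← NNReal.coe_mul, ← Real.coe_sqrt] at this
  exact_mod_cast this

lemma lintegral_mul_le_two_mul_sqrt {α : Type*} [MeasurableSpace α] {ν : Measure α}
    {f k m : α → ℝ≥0∞} {A N I : ℝ≥0} (hk : Measurable k) (hm : Measurable m)
    (hsublevel : ∀ t : ℝ≥0, ∫⁻ p in {p | m p < t * k p}, m p * k p ∂ν ≤ A * t)
    (hf : ∀ᵐ p ∂ν, f p ≤ N * m p) (hI : ∫⁻ p, m p * f p ∂ν ≤ I) :
    ∫⁻ p, f p * k p ∂ν ≤ 2 * NNReal.sqrt (N * A * I) := by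
  refine le_two_mul_sqrt_of_forall_le_mul_add_div fun t ht ↦ ?_
  have ht₀ : (t : ℝ≥0∞) ≠ 0 := by exact_mod_cast ht.ne'
  set S := {p | m p < t * k p}
  have hS : MeasurableSet S := measurableSet_lt hm (hk.const_mul _)
  have hon : ∫⁻ p in S, f p * k p ∂ν ≤ (N * A : ℝ≥0) * t := by
    calc ∫⁻ p in S, f p * k p ∂ν
        ≤ ∫⁻ p in S, N * (m p * k p) ∂ν := by
          refine lintegral_mono_ae ((ae_restrict_of_ae hf).mono fun p hp ↦ ?_)
          rw [← mul_assoc]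
          gcongr
      _ = N * ∫⁻ p in S, m p * k p ∂ν := lintegral_const_mul' _ _ ENNReal.coe_ne_top
      _ ≤ N * (A * t) := by grw [hsublevel t]
      _ = (N * A : ℝ≥0) * t := by rw [ENNReal.coe_mul, mul_assoc]
  have hoff : ∫⁻ p in Sᶜ, f p * k p ∂ν ≤ I / t := by
    calc ∫⁻ p in Sᶜ, f p * k p ∂ν
        ≤ ∫⁻ p in Sᶜ, (t : ℝ≥0∞)⁻¹ * (m p * f p) ∂ν := by
          refine setLIntegral_mono' hS.compl fun p hp ↦ ?_
          have hkp : k p ≤ (t : ℝ≥0∞)⁻¹ * m p := by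
            rw [mul_comm, ← div_eq_mul_inv,
              ENNReal.le_div_iff_mul_le (.inl ht₀) (.inl ENNReal.coe_ne_top), mul_comm]
            exact not_lt.1 hp
          grw [hkp]
          exact (by ring : f p * ((t : ℝ≥0∞)⁻¹ * m p) = _).le
      _ ≤ ∫⁻ p, (t : ℝ≥0∞)⁻¹ * (m p * f p) ∂ν := setLIntegral_le_lintegral _ _
      _ = (t : ℝ≥0∞)⁻¹ * ∫⁻ p, m p * f p ∂ν :=
          lintegral_const_mul' _ _ (ENNReal.inv_ne_top.2 ht₀)
      _ ≤ I / t := by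
          grw [hI]
          rw [mul_comm, div_eq_mul_inv]
  rw [← lintegral_add_compl _ hS]
  exact add_le_add hon hoff

end Interpolation

section RieszPotential

lemma indicator_closedBall_norm_rpow {E : Type*} [SeminormedAddCommGroup E] (s ρ : ℝ) :
    (closedBall (0 : E) ρ).indicator (fun p ↦ ‖p‖ ^ s) =
      fun p ↦ (Iic ρ).indicator (· ^ s) ‖p‖ := by
  ext p
  simp only [indicator, mem_closedBall_zero_iff, mem_Iic]

lemma eqOn_pow_smul_indicator_rpow {n : ℕ} (hn : 0 < n) (s ρ : ℝ) :
    EqOn (fun y ↦ y ^ (n - 1) • (Iic ρ).indicator (· ^ s) y)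
      ((Iic ρ).indicator (· ^ (s + n - 1))) (Ioi 0) := by
  intro y hy
  by_cases hyρ : y ∈ Iic ρ
  · simp only [indicator_of_mem hyρ, smul_eq_mul]
    rw [← Real.rpow_natCast, ← Real.rpow_add hy, Nat.cast_pred hn]
    ring_nf
  · simp only [indicator_of_notMem hyρ, smul_zero]

lemma enorm_le_two_mul_or_enorm_le_three_mul {E : Type*} [SeminormedAddCommGroup E] (p x : E) :
    (‖p‖ₑ ≤ 2 * ‖x‖ₑ ∧ ‖x‖ₑ ≤ 2 * ‖p‖ₑ) ∨ ‖p‖ₑ ≤ 3 * ‖p - x‖ₑ := by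
  simp only [enorm]
  norm_cast
  simp only [← NNReal.coe_le_coe, NNReal.coe_mul, NNReal.coe_ofNat, coe_nnnorm]
  have hp : ‖p‖ ≤ ‖p - x‖ + ‖x‖ := norm_le_norm_sub_add p x
  have hx : ‖x‖ ≤ ‖p‖ + ‖p - x‖ := norm_le_norm_add_norm_sub p x
  rcases le_total (2 * ‖p - x‖) ‖x‖ with h | h
  · exact .inl ⟨by linarith, by linarith⟩
  · exact .inr (by linarith)

lemma enorm_sub_rpow_le_div_of_enorm_rpow_mul_le {E : Type*} [NormedAddCommGroup E] {a b : ℝ}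
    (ha : 0 ≤ a) (hb : 0 < b) {p x : E} {t : ℝ≥0∞} (hpx : ‖p‖ₑ ≤ 2 * ‖x‖ₑ)
    (hxp : ‖x‖ₑ ≤ 2 * ‖p‖ₑ) (hp : ‖p‖ₑ ^ a * ‖p - x‖ₑ ^ b ≤ t) :
    ‖p - x‖ₑ ^ b ≤ 2 ^ a * t / ‖x‖ₑ ^ a := by
  rcases eq_or_ne x 0 with rfl | hx
  · have hp₀ : p = 0 := by simpa using hpx
    simp [hp₀, hb]
  refine (ENNReal.le_div_iff_mul_le (.inl (by simp [hx])) (.inl (by simp [ha]))).2 ?_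
  calc ‖p - x‖ₑ ^ b * ‖x‖ₑ ^ a ≤ ‖p - x‖ₑ ^ b * (2 * ‖p‖ₑ) ^ a := by gcongr
    _ = 2 ^ a * (‖p‖ₑ ^ a * ‖p - x‖ₑ ^ b) := by
      rw [ENNReal.mul_rpow_of_nonneg _ _ ha]; ring
    _ ≤ 2 ^ a * t := by gcongr

lemma rpow_neg_le_rpow_mul_rpow_neg {u v c : ℝ≥0∞} {b : ℝ} (hb : 0 ≤ b) (hc₀ : c ≠ 0)
    (hc : c ≠ ∞) (h : u ≤ c * v) : v ^ (-b) ≤ c ^ b * u ^ (-b) := by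
  rw [ENNReal.rpow_neg, ENNReal.rpow_neg, ← div_eq_mul_inv, ENNReal.inv_le_iff_inv_le,
    ENNReal.inv_div (.inr (ENNReal.rpow_ne_top_of_nonneg hb hc))
      (.inr (by simp [hc₀, hc]))]
  refine ENNReal.div_le_of_le_mul' ?_
  rw [← ENNReal.mul_rpow_of_nonneg _ _ hb]
  gcongr

lemma enorm_rpow_mul_enorm_sub_rpow_neg_le {E : Type*} [NormedAddCommGroup E] {a b : ℝ}
    (hb : 0 ≤ b) {c : ℝ≥0∞} (hc₀ : c ≠ 0) (hc : c ≠ ∞) {p x : E} (hp : p ≠ 0)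
    (hpx : ‖p‖ₑ ≤ c * ‖p - x‖ₑ) :
    ‖p‖ₑ ^ a * ‖p - x‖ₑ ^ (-b) ≤ c ^ b * ‖p‖ₑ ^ (a - b) :=
  calc ‖p‖ₑ ^ a * ‖p - x‖ₑ ^ (-b)
    _ ≤ ‖p‖ₑ ^ a * (c ^ b * ‖p‖ₑ ^ (-b)) := by
      grw [rpow_neg_le_rpow_mul_rpow_neg hb hc₀ hc hpx]
    _ = c ^ b * ‖p‖ₑ ^ (a - b) := by
      rw [sub_eq_add_neg, ENNReal.rpow_add _ _ (enorm_ne_zero.2 hp) enorm_ne_top]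
      ring

variable {E : Type*} [NormedAddCommGroup E] [NormedSpace ℝ E] [FiniteDimensional ℝ E]
  [Nontrivial E] [MeasurableSpace E] [BorelSpace E] (μ : Measure E) [μ.IsAddHaarMeasure]

local notation "dim" => Module.finrank ℝ E

lemma integrableOn_closedBall_norm_rpow {s ρ : ℝ} (hs : 0 < s + dim) (hρ : 0 ≤ ρ) :
    IntegrableOn (fun p : E ↦ ‖p‖ ^ s) (closedBall 0 ρ) μ := by
  rw [← integrable_indicator_iff measurableSet_closedBall, indicator_closedBall_norm_rpow,
    integrable_fun_norm_addHaar μ (f := (Iic ρ).indicator (· ^ s)),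
    integrableOn_congr_fun (eqOn_pow_smul_indicator_rpow Module.finrank_pos s ρ) measurableSet_Ioi,
    IntegrableOn, integrable_indicator_iff measurableSet_Iic, IntegrableOn,
    Measure.restrict_restrict measurableSet_Iic, inter_comm, Ioi_inter_Iic, ← IntegrableOn,
    ← intervalIntegrable_iff_integrableOn_Ioc_of_le hρ]
  exact intervalIntegral.intervalIntegrable_rpow' (by linarith)

lemma setIntegral_closedBall_norm_rpow {s ρ : ℝ} (hs : 0 < s + dim) (hρ : 0 ≤ ρ) :
    ∫ p in closedBall (0 : E) ρ, ‖p‖ ^ s ∂μ =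
      dim / (s + dim) * μ.real (ball 0 1) * ρ ^ (s + dim) := by
  rw [← integral_indicator measurableSet_closedBall, indicator_closedBall_norm_rpow,
    integral_fun_norm_addHaar μ ((Iic ρ).indicator (· ^ s)),
    setIntegral_congr_fun measurableSet_Ioi
      (eqOn_pow_smul_indicator_rpow Module.finrank_pos s ρ),
    setIntegral_indicator measurableSet_Iic, Ioi_inter_Iic, ← intervalIntegral.integral_of_le hρ,
    integral_rpow (.inl (by linarith)), sub_add_cancel, Real.zero_rpow hs.ne', nsmul_eq_mul,
    smul_eq_mul]
  ring

lemma setLIntegral_enorm_sub_rpow_le (x : E) {s : ℝ} (hs : 0 < s + dim) (t : ℝ≥0∞) :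
    ∫⁻ p in {p | ‖p - x‖ₑ ^ (s + dim) ≤ t}, ‖p - x‖ₑ ^ s ∂μ ≤
      ENNReal.ofReal (dim / (s + dim)) * μ (ball 0 1) * t := by
  have hcenter : ∫⁻ p in {p | ‖p - x‖ₑ ^ (s + dim) ≤ t}, ‖p - x‖ₑ ^ s ∂μ =
      ∫⁻ p in {p | ‖p‖ₑ ^ (s + dim) ≤ t}, ‖p‖ₑ ^ s ∂μ :=
    (measurePreserving_sub_right μ x).setLIntegral_comp_preimage
      (measurableSet_le (measurable_enorm.pow_const _) measurable_const)
      (measurable_enorm.pow_const s)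
  rw [hcenter]
  have hdim : 0 < (dim : ℝ) := Nat.cast_pos.2 Module.finrank_pos
  rcases eq_or_ne t ∞ with rfl | ht
  · have : 0 < dim / (s + dim) := by positivity
    rw [ENNReal.mul_top (mul_ne_zero (by simpa) (measure_ball_pos μ 0 one_pos).ne')]
    exact le_top
  lift t to ℝ≥0 using ht
  set ρ : ℝ≥0 := t ^ (s + dim)⁻¹
  have hset : {p : E | ‖p‖ₑ ^ (s + dim) ≤ t} = closedBall 0 ρ := by
    ext p
    rw [mem_ofPred_eq, ← ENNReal.le_rpow_inv_iff hs, ENNReal.rpow_ofNNReal (by positivity),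
      mem_closedBall_zero_iff, enorm_le_coe, ← coe_nnnorm, NNReal.coe_le_coe]
  have hae : (fun p : E ↦ ‖p‖ₑ ^ s) =ᵐ[μ] fun p ↦ ENNReal.ofReal (‖p‖ ^ s) := by
    filter_upwards [μ.ae_ne 0] with p hp
    rw [← ofReal_norm, ENNReal.ofReal_rpow_of_pos (norm_pos_iff.2 hp)]
  have hρ : (ρ : ℝ) ^ (s + dim) = t := by
    rw [← NNReal.coe_rpow, NNReal.rpow_inv_rpow hs.ne']
  rw [hset, lintegral_congr_ae (ae_restrict_of_ae hae),
    ← ofReal_integral_eq_lintegral_ofReal (integrableOn_closedBall_norm_rpow μ hs ρ.coe_nonneg)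
      (ae_of_all _ fun p ↦ Real.rpow_nonneg (norm_nonneg p) s),
    setIntegral_closedBall_norm_rpow μ hs ρ.coe_nonneg, hρ, ENNReal.ofReal_mul (by positivity),
    ENNReal.ofReal_mul (by positivity), ofReal_measureReal, ENNReal.ofReal_coe_nnreal]

lemma setLIntegral_sublevel_inter_comparable_le {a : ℝ} (ha : 0 ≤ a) (x : E) (t : ℝ≥0∞) :
    ∫⁻ p in {p | (‖p‖ₑ ≤ 2 * ‖x‖ₑ ∧ ‖x‖ₑ ≤ 2 * ‖p‖ₑ) ∧ ‖p‖ₑ ^ a * ‖p - x‖ₑ ^ (dim / 2 : ℝ) ≤ t},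
      ‖p‖ₑ ^ a * ‖p - x‖ₑ ^ (-(dim / 2) : ℝ) ∂μ ≤ 2 * 4 ^ a * μ (ball 0 1) * t := by
  have hdim : 0 < (dim : ℝ) := Nat.cast_pos.2 Module.finrank_pos
  set b : ℝ := dim / 2 with hb
  have hb₀ : 0 < b := by positivity
  have hbdim : -b + dim = b := by ring
  set τ := 2 ^ a * t / ‖x‖ₑ ^ a
  have hsub : {p | (‖p‖ₑ ≤ 2 * ‖x‖ₑ ∧ ‖x‖ₑ ≤ 2 * ‖p‖ₑ) ∧ ‖p‖ₑ ^ a * ‖p - x‖ₑ ^ b ≤ t} ⊆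
      {p | ‖p - x‖ₑ ^ (-b + dim) ≤ τ} := by
    rintro p ⟨⟨hpx, hxp⟩, hp⟩
    rw [mem_ofPred_eq, hbdim]
    exact enorm_sub_rpow_le_div_of_enorm_rpow_mul_le ha hb₀ hpx hxp hp
  have hfour : (2 : ℝ≥0∞) ^ a * 2 ^ a = 4 ^ a := by
    rw [← ENNReal.mul_rpow_of_nonneg _ _ ha]; norm_num
  have hcoef : ENNReal.ofReal (dim / (-b + dim)) = 2 := by
    rw [hbdim, hb, div_div_cancel₀ hdim.ne', ENNReal.ofReal_ofNat]
  calc _ ≤ ∫⁻ p in {p | (‖p‖ₑ ≤ 2 * ‖x‖ₑ ∧ ‖x‖ₑ ≤ 2 * ‖p‖ₑ) ∧ ‖p‖ₑ ^ a * ‖p - x‖ₑ ^ b ≤ t},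
          (2 * ‖x‖ₑ) ^ a * ‖p - x‖ₑ ^ (-b) ∂μ := by
        refine setLIntegral_mono (by fun_prop) fun p hp ↦ ?_
        gcongr
        exact hp.1.1
    _ ≤ ∫⁻ p in {p | ‖p - x‖ₑ ^ (-b + dim) ≤ τ}, (2 * ‖x‖ₑ) ^ a * ‖p - x‖ₑ ^ (-b) ∂μ :=
        lintegral_mono_set hsub
    _ = (2 * ‖x‖ₑ) ^ a * ∫⁻ p in {p | ‖p - x‖ₑ ^ (-b + dim) ≤ τ}, ‖p - x‖ₑ ^ (-b) ∂μ :=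
        lintegral_const_mul _ (by fun_prop)
    _ ≤ (2 * ‖x‖ₑ) ^ a * (2 * μ (ball 0 1) * τ) := by
        grw [setLIntegral_enorm_sub_rpow_le μ x (by linarith) τ, hcoef]
    _ = 2 * 2 ^ a * μ (ball 0 1) * (‖x‖ₑ ^ a * τ) := by
        rw [ENNReal.mul_rpow_of_nonneg _ _ ha]; ring
    _ ≤ 2 * 2 ^ a * μ (ball 0 1) * (2 ^ a * t) := by grw [ENNReal.mul_div_le]
    _ = 2 * 4 ^ a * μ (ball 0 1) * t := by rw [← hfour]; ring

lemma setLIntegral_sublevel_inter_far_le {a : ℝ} (ha : 0 ≤ a) (x : E) (t : ℝ≥0∞) :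
    ∫⁻ p in {p | ‖p‖ₑ ≤ 3 * ‖p - x‖ₑ ∧ ‖p‖ₑ ^ a * ‖p - x‖ₑ ^ (dim / 2 : ℝ) ≤ t},
      ‖p‖ₑ ^ a * ‖p - x‖ₑ ^ (-(dim / 2) : ℝ) ∂μ ≤ 2 * 3 ^ dim * μ (ball 0 1) * t := by
  have hdim : 0 < (dim : ℝ) := Nat.cast_pos.2 Module.finrank_pos
  set b : ℝ := dim / 2 with hb
  have hb₀ : 0 < b := by positivity
  have habdim : a - b + dim = a + b := by ring
  have hsub : {p | ‖p‖ₑ ≤ 3 * ‖p - x‖ₑ ∧ ‖p‖ₑ ^ a * ‖p - x‖ₑ ^ b ≤ t} ⊆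
      {p | ‖p - 0‖ₑ ^ (a - b + dim) ≤ 3 ^ b * t} := by
    rintro p ⟨hpx, hp⟩
    rw [mem_ofPred_eq, habdim, sub_zero]
    calc ‖p‖ₑ ^ (a + b) = ‖p‖ₑ ^ a * ‖p‖ₑ ^ b := ENNReal.rpow_add_of_nonneg _ _ ha hb₀.le
      _ ≤ ‖p‖ₑ ^ a * (3 * ‖p - x‖ₑ) ^ b := by gcongr
      _ = 3 ^ b * (‖p‖ₑ ^ a * ‖p - x‖ₑ ^ b) := by
        rw [ENNReal.mul_rpow_of_nonneg _ _ hb₀.le]; ring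
      _ ≤ 3 ^ b * t := by gcongr
  have hthree : (3 : ℝ≥0∞) ^ b * 3 ^ b = 3 ^ dim := by
    rw [← ENNReal.rpow_add_of_nonneg _ _ hb₀.le hb₀.le, hb, add_halves, ENNReal.rpow_natCast]
  have hcoef : ENNReal.ofReal (dim / (a - b + dim)) ≤ 2 := by
    refine ENNReal.ofReal_le_of_le_toReal ?_
    rw [habdim, ENNReal.toReal_ofNat, div_le_iff₀ (by positivity)]
    linarith
  calc _ ≤ ∫⁻ p in {p | ‖p‖ₑ ≤ 3 * ‖p - x‖ₑ ∧ ‖p‖ₑ ^ a * ‖p - x‖ₑ ^ b ≤ t},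
          3 ^ b * ‖p - 0‖ₑ ^ (a - b) ∂μ := by
        refine setLIntegral_mono_ae (by fun_prop) ?_
        filter_upwards [μ.ae_ne 0] with p hp₀ hp
        simpa only [sub_zero] using
          enorm_rpow_mul_enorm_sub_rpow_neg_le hb₀.le (by simp) (by simp) hp₀ hp.1
    _ ≤ ∫⁻ p in {p | ‖p - 0‖ₑ ^ (a - b + dim) ≤ 3 ^ b * t}, 3 ^ b * ‖p - 0‖ₑ ^ (a - b) ∂μ :=
        lintegral_mono_set hsub
    _ = 3 ^ b * ∫⁻ p in {p | ‖p - 0‖ₑ ^ (a - b + dim) ≤ 3 ^ b * t}, ‖p - 0‖ₑ ^ (a - b) ∂μ :=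
        lintegral_const_mul _ (by fun_prop)
    _ ≤ 3 ^ b * (2 * μ (ball 0 1) * (3 ^ b * t)) := by
        grw [setLIntegral_enorm_sub_rpow_le μ 0 (by linarith) (3 ^ b * t), hcoef]
    _ = 2 * 3 ^ dim * μ (ball 0 1) * t := by rw [← hthree]; ring

lemma setLIntegral_enorm_rpow_mul_enorm_sub_rpow_le {a : ℝ} (ha : 0 ≤ a) (x : E) (t : ℝ≥0∞) :
    ∫⁻ p in {p | ‖p‖ₑ ^ a * ‖p - x‖ₑ ^ (dim / 2 : ℝ) ≤ t},
      ‖p‖ₑ ^ a * ‖p - x‖ₑ ^ (-(dim / 2) : ℝ) ∂μ ≤ 2 * (4 ^ a + 3 ^ dim) * μ (ball 0 1) * t := by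
  calc _ ≤ ∫⁻ p in {p | (‖p‖ₑ ≤ 2 * ‖x‖ₑ ∧ ‖x‖ₑ ≤ 2 * ‖p‖ₑ) ∧
            ‖p‖ₑ ^ a * ‖p - x‖ₑ ^ (dim / 2 : ℝ) ≤ t} ∪
          {p | ‖p‖ₑ ≤ 3 * ‖p - x‖ₑ ∧ ‖p‖ₑ ^ a * ‖p - x‖ₑ ^ (dim / 2 : ℝ) ≤ t},
          ‖p‖ₑ ^ a * ‖p - x‖ₑ ^ (-(dim / 2) : ℝ) ∂μ :=
        lintegral_mono_set fun p hp ↦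
          (enorm_le_two_mul_or_enorm_le_three_mul p x).imp (fun h ↦ ⟨h, hp⟩) (fun h ↦ ⟨h, hp⟩)
    _ ≤ _ := lintegral_union_le _ _ _
    _ ≤ 2 * 4 ^ a * μ (ball 0 1) * t + 2 * 3 ^ dim * μ (ball 0 1) * t :=
        add_le_add (setLIntegral_sublevel_inter_comparable_le μ ha x t)
          (setLIntegral_sublevel_inter_far_le μ ha x t)
    _ = 2 * (4 ^ a + 3 ^ dim) * μ (ball 0 1) * t := by ring

theorem lintegral_mul_enorm_sub_rpow_le {ν : Measure E} (hν : ν ≤ μ) {a : ℝ} (ha : 0 ≤ a)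
    {f : E → ℝ≥0∞} {A N I : ℝ≥0} (hA : 2 * (4 ^ a + 3 ^ dim) * μ (ball 0 1) ≤ A)
    (hf : ∀ᵐ p ∂ν, f p ≤ N * ‖p‖ₑ ^ a) (hI : ∫⁻ p, ‖p‖ₑ ^ a * f p ∂ν ≤ I) (x : E) :
    ∫⁻ p, f p * ‖p - x‖ₑ ^ (-(dim / 2) : ℝ) ∂ν ≤ 2 * NNReal.sqrt (N * A * I) := by
  refine lintegral_mul_le_two_mul_sqrt (by fun_prop) (by fun_prop) (fun t ↦ ?_) hf hI
  calc _ ≤ ∫⁻ p in {p | ‖p‖ₑ ^ a * ‖p - x‖ₑ ^ (dim / 2 : ℝ) ≤ t},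
          ‖p‖ₑ ^ a * ‖p - x‖ₑ ^ (-(dim / 2) : ℝ) ∂μ := by
        refine lintegral_mono' (Measure.restrict_mono (fun p hp ↦ ?_) hν) le_rfl
        rw [mem_ofPred_eq, ENNReal.rpow_neg, ← div_eq_mul_inv] at hp
        exact ENNReal.mul_le_of_le_div hp.le
    _ ≤ 2 * (4 ^ a + 3 ^ dim) * μ (ball 0 1) * t :=
        setLIntegral_enorm_rpow_mul_enorm_sub_rpow_le μ ha x t
    _ ≤ A * t := by gcongr

end RieszPotential

section AffinePowers

variable {d b c : ℝ}

lemma intervalIntegrable_div_add_mul_pow (hd : 0 < d) (hb : 0 ≤ b) (hc : 0 ≤ c) (k : ℕ) (m : ℝ) :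
    IntervalIntegrable (fun t ↦ m / (d + b * t) ^ k) volume 0 c := by
  refine ContinuousOn.intervalIntegrable (ContinuousOn.div (by fun_prop) (by fun_prop) ?_)
  intro t ht
  rw [uIcc_of_le hc] at ht
  have := mul_nonneg hb ht.1
  positivity

lemma integral_mul_div_add_mul_pow_succ (hd : 0 < d) (hb : 0 ≤ b) (hc : 0 ≤ c) (k : ℕ) :
    ∫ t in 0..c, k * b / (d + b * t) ^ (k + 1) = (d ^ k)⁻¹ - ((d + b * c) ^ k)⁻¹ := by
  have hderiv : ∀ t ∈ uIcc 0 c,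
      HasDerivAt (fun t ↦ -((d + b * t) ^ k)⁻¹) (k * b / (d + b * t) ^ (k + 1)) t := by
    intro t ht
    rw [uIcc_of_le hc] at ht
    have hpos : 0 < d + b * t := by linarith [mul_nonneg hb ht.1]
    have haffine : HasDerivAt (fun t ↦ d + b * t) b t := by
      simpa using ((hasDerivAt_id t).const_mul b).const_add d
    refine ((haffine.pow k).inv (pow_pos hpos k).ne').neg.congr_deriv ?_
    rcases k with _ | k
    · simp
    · simp only [Nat.add_sub_cancel, Pi.pow_apply]
      field_simp
      ring
  rw [intervalIntegral.integral_eq_sub_of_hasDerivAt hderiv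
    (intervalIntegrable_div_add_mul_pow hd hb hc _ _)]
  simp only [mul_zero, add_zero]
  ring

lemma integral_mul_div_add_mul_pow_succ_le (hd : 0 < d) (hb : 0 ≤ b) (hc : 0 ≤ c) (k : ℕ) :
    ∫ t in 0..c, k * b / (d + b * t) ^ (k + 1) ≤ (d ^ k)⁻¹ := by
  rw [integral_mul_div_add_mul_pow_succ hd hb hc, sub_le_self_iff]
  positivity

lemma norm_integral_le_of_norm_le_div_add_mul_pow_succ {F : Type*} [NormedAddCommGroup F]
    [NormedSpace ℝ F] {g : ℝ → F} {M : ℝ} {k : ℕ} (hd : 0 < d) (hb : 0 ≤ b) (hc : 0 ≤ c)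
    (hM : 0 ≤ M) (hg : ∀ t ∈ Ioc 0 c, ‖g t‖ ≤ M * (k * b / (d + b * t) ^ (k + 1))) :
    ‖∫ t in 0..c, g t‖ ≤ M * (d ^ k)⁻¹ := by
  calc ‖∫ t in 0..c, g t‖ ≤ ∫ t in 0..c, M * (k * b / (d + b * t) ^ (k + 1)) :=
        intervalIntegral.norm_integral_le_of_norm_le hc (ae_of_all _ hg)
          ((intervalIntegrable_div_add_mul_pow hd hb hc _ _).const_mul M)
    _ = M * ∫ t in 0..c, k * b / (d + b * t) ^ (k + 1) :=
        intervalIntegral.integral_const_mul _ _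
    _ ≤ M * (d ^ k)⁻¹ := by grw [integral_mul_div_add_mul_pow_succ_le hd hb hc]

lemma norm_integral_integral_le_of_norm_le_div_add_pow_three {F : Type*} [NormedAddCommGroup F]
    [NormedSpace ℝ F] {g : ℝ → ℝ → F} {a M : ℝ} (hd : 0 < d) (ha : 0 ≤ a) (hb : 0 ≤ b)
    (hc : 0 ≤ c) (hM : 0 ≤ M) (hg : ∀ θ ∈ Ioc 0 c, ∀ φ ∈ Ioc 0 c,
      ‖g θ φ‖ ≤ M * (a * b / (d + a * θ + b * φ) ^ 3)) :
    ‖∫ θ in 0..c, ∫ φ in 0..c, g θ φ‖ ≤ M / 2 * d⁻¹ := by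
  have hinner : ∀ θ ∈ Ioc 0 c, ‖∫ φ in 0..c, g θ φ‖ ≤ M * a / 2 * ((d + a * θ) ^ 2)⁻¹ := by
    intro θ hθ
    refine norm_integral_le_of_norm_le_div_add_mul_pow_succ
      (add_pos_of_pos_of_nonneg hd (mul_nonneg ha hθ.1.le)) hb hc (by positivity) fun φ hφ ↦
        (hg θ hθ φ hφ).trans_eq ?_
    push_cast
    ring
  rw [← pow_one d]
  refine norm_integral_le_of_norm_le_div_add_mul_pow_succ hd ha hc (by positivity) fun θ hθ ↦
    (hinner θ hθ).trans_eq ?_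
  push_cast
  ring

end AffinePowers

section Coercivity

/-- The squared distance in `ℂ` between `r` and `a * exp (I * θ)`, for real `r` and `a`. The
denominator `X₋₋` of the Biot–Savart kernel is a sum of two such terms. -/
noncomputable def chordSq (r a θ : ℝ) : ℝ :=
  (r - a) ^ 2 + 2 * r * a * (1 - cos θ)

lemma Xmm_eq_chordSq_add_chordSq (r s a b θ φ : ℝ) :
    Xmm r s a b θ φ = chordSq r a θ + chordSq s b φ := by
  rw [Xmm, chordSq, chordSq]
  ring

lemma sq_sub_mul_cos_le_chordSq (r a θ : ℝ) : (a - r * cos θ) ^ 2 ≤ chordSq r a θ := by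
  rw [chordSq]
  nlinarith [mul_nonneg (sq_nonneg r) (sq_nonneg (sin θ)), sin_sq_add_cos_sq θ]

lemma chordSq_nonneg (r a θ : ℝ) : 0 ≤ chordSq r a θ :=
  (sq_nonneg _).trans (sq_sub_mul_cos_le_chordSq r a θ)

variable {r s a b θ φ : ℝ}

lemma sq_sub_le_chordSq (hr : 0 ≤ r) (ha : 0 ≤ a) : (r - a) ^ 2 ≤ chordSq r a θ :=
  le_add_of_nonneg_right (mul_nonneg (by positivity) (sub_nonneg.2 (cos_le_one θ)))

lemma sq_mul_le_sq_pi_mul_chordSq (hr : 0 ≤ r) (ha : 0 ≤ a) (hθ : |θ| ≤ π) :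
    (a * θ) ^ 2 ≤ π ^ 2 * chordSq r a θ := by
  set q := θ ^ 2 / π ^ 2 with hq
  have hθq : θ ^ 2 = π ^ 2 * q := by
    rw [hq]
    field_simp
  have hcos : 2 * q ≤ 1 - cos θ := by
    have := cos_le_one_sub_mul_cos_sq hθ
    rw [hq]
    linear_combination this
  have hq₁ : q ≤ 1 := div_le_one_of_le₀ (sq_le_sq' (abs_le.1 hθ).1 (abs_le.1 hθ).2) (by positivity)
  have hchord : a ^ 2 * q ≤ chordSq r a θ := by
    calc a ^ 2 * q ≤ a ^ 2 * q + ((1 - q) * (r - a) ^ 2 + q * (r ^ 2 + 2 * r * a)) := by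
          have : 0 ≤ 1 - q := sub_nonneg.2 hq₁
          exact le_add_of_nonneg_right (by positivity)
      _ = (r - a) ^ 2 + 2 * r * a * (2 * q) := by ring
      _ ≤ chordSq r a θ := by
          rw [chordSq]
          gcongr
  calc (a * θ) ^ 2 = π ^ 2 * (a ^ 2 * q) := by rw [mul_pow, hθq]; ring
    _ ≤ π ^ 2 * chordSq r a θ := by gcongr

lemma chordSq_le_Xmm_left : chordSq r a θ ≤ Xmm r s a b θ φ := by
  rw [Xmm_eq_chordSq_add_chordSq]
  exact le_add_of_nonneg_right (chordSq_nonneg _ _ _)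

lemma chordSq_le_Xmm_right : chordSq s b φ ≤ Xmm r s a b θ φ := by
  rw [Xmm_eq_chordSq_add_chordSq]
  exact le_add_of_nonneg_left (chordSq_nonneg _ _ _)

lemma abs_sub_mul_cos_le_sqrt_Xmm : |b - s * cos φ| ≤ √(Xmm r s a b θ φ) :=
  abs_le_sqrt ((sq_sub_mul_cos_le_chordSq s b φ).trans chordSq_le_Xmm_right)

lemma dist_le_sqrt_Xmm (hr : 0 ≤ r) (hs : 0 ≤ s) (ha : 0 ≤ a) (hb : 0 ≤ b) :
    dist (r, s) (a, b) ≤ √(Xmm r s a b θ φ) :=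
  max_le (abs_le_sqrt ((sq_sub_le_chordSq hr ha).trans chordSq_le_Xmm_left))
    (abs_le_sqrt ((sq_sub_le_chordSq hs hb).trans chordSq_le_Xmm_right))

lemma mul_le_pi_mul_sqrt_of_chordSq_le {X : ℝ} (hr : 0 ≤ r) (ha : 0 ≤ a) (hθ : |θ| ≤ π)
    (hX : chordSq r a θ ≤ X) : a * θ ≤ π * √X := by
  rw [← sqrt_sq pi_pos.le, ← sqrt_mul (by positivity)]
  refine le_sqrt_of_sq_le ((sq_mul_le_sq_pi_mul_chordSq hr ha hθ).trans ?_)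
  gcongr

lemma dist_add_mul_add_mul_le_sqrt_Xmm (hr : 0 ≤ r) (hs : 0 ≤ s) (ha : 0 ≤ a) (hb : 0 ≤ b)
    (hθ : |θ| ≤ π) (hφ : |φ| ≤ π) :
    dist (r, s) (a, b) + a * θ + b * φ ≤ 8 * √(Xmm r s a b θ φ) := by
  calc dist (r, s) (a, b) + a * θ + b * φ
    _ ≤ √(Xmm r s a b θ φ) + π * √(Xmm r s a b θ φ) + π * √(Xmm r s a b θ φ) :=
      add_le_add (add_le_add (dist_le_sqrt_Xmm hr hs ha hb)
        (mul_le_pi_mul_sqrt_of_chordSq_le hr ha hθ chordSq_le_Xmm_left))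
        (mul_le_pi_mul_sqrt_of_chordSq_le hs hb hφ chordSq_le_Xmm_right)
    _ = (1 + 2 * π) * √(Xmm r s a b θ φ) := by ring
    _ ≤ 8 * √(Xmm r s a b θ φ) := by
      gcongr
      linarith [pi_lt_d2]

end Coercivity

section Kernel

variable {r s a b : ℝ}

lemma abs_Fr_integrand_le_s8 {θ φ : ℝ} (hr : 0 ≤ r) (hs : 0 ≤ s) (ha : 0 ≤ a) (hb : 0 ≤ b)
    (hd : 0 < dist (r, s) (a, b)) (hθ : θ ∈ Ioc 0 π) (hφ : φ ∈ Ioc 0 π) :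
    |a * b * cos θ * (b - s * cos φ) / Xmm r s a b θ φ ^ 2| ≤
      512 * (a * b / (dist (r, s) (a, b) + a * θ + b * φ) ^ 3) := by
  set D := dist (r, s) (a, b) + a * θ + b * φ
  have hD : 0 < D := by
    have := mul_nonneg ha hθ.1.le
    have := mul_nonneg hb hφ.1.le
    positivity
  set Q := √(Xmm r s a b θ φ) with hQ
  have hX : Xmm r s a b θ φ = Q ^ 2 := by
    rw [hQ, sq_sqrt]
    exact (chordSq_nonneg r a θ).trans chordSq_le_Xmm_left
  have hDQ : D ≤ 8 * Q := dist_add_mul_add_mul_le_sqrt_Xmm hr hs ha hb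
    (abs_le.2 ⟨by linarith [hθ.1, pi_pos], hθ.2⟩) (abs_le.2 ⟨by linarith [hφ.1, pi_pos], hφ.2⟩)
  have hQ₀ : 0 < Q := by linarith
  calc |a * b * cos θ * (b - s * cos φ) / Xmm r s a b θ φ ^ 2|
    _ = a * b * |cos θ| * |b - s * cos φ| / Q ^ 4 := by
      rw [hX, abs_div, abs_mul, abs_mul, abs_mul, abs_of_nonneg ha, abs_of_nonneg hb, ← pow_mul,
        abs_of_pos (pow_pos hQ₀ _)]
    _ ≤ a * b * 1 * Q / Q ^ 4 := by
      gcongr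
      · exact abs_cos_le_one θ
      · exact abs_sub_mul_cos_le_sqrt_Xmm
    _ = a * b / Q ^ 3 := by
      field_simp
    _ ≤ a * b / (D / 8) ^ 3 := by
      gcongr
      linarith
    _ = 512 * (a * b / D ^ 3) := by
      field_simp
      norm_num

lemma abs_Fr_le_s8 (hr : 0 ≤ r) (hs : 0 ≤ s) (ha : 0 ≤ a) (hb : 0 ≤ b)
    (hd : 0 < dist (r, s) (a, b)) : |Fr r s a b| ≤ 52 * (dist (r, s) (a, b))⁻¹ := by
  have hintegral := norm_integral_integral_le_of_norm_le_div_add_pow_three hd ha hb pi_pos.le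
    (M := 512) (by norm_num) fun θ hθ φ hφ ↦
      (norm_eq_abs _).trans_le (abs_Fr_integrand_le_s8 hr hs ha hb hd hθ hφ)
  have hconst : 2 / π ^ 2 * 256 ≤ 52 := by
    rw [div_mul_eq_mul_div, div_le_iff₀ (by positivity)]
    nlinarith [pi_gt_d2]
  calc |Fr r s a b| ≤ 2 / π ^ 2 * (512 / 2 * (dist (r, s) (a, b))⁻¹) := by
        rw [Fr, abs_mul, abs_of_pos (a := 2 / π ^ 2) (by positivity)]
        gcongr
        exact hintegral
    _ = 2 / π ^ 2 * 256 * (dist (r, s) (a, b))⁻¹ := by ring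
    _ ≤ 52 * (dist (r, s) (a, b))⁻¹ := by gcongr

lemma enorm_Fr_le (hr : 0 ≤ r) (hs : 0 ≤ s) {p : ℝ × ℝ} (hp : p ∈ quadrant) :
    ‖Fr r s p.1 p.2‖ₑ ≤ 52 * ‖p - (r, s)‖ₑ⁻¹ := by
  rcases eq_or_ne p (r, s) with rfl | hne
  · simp
  have hd : 0 < dist (r, s) p := dist_pos.2 hne.symm
  have hle := abs_Fr_le_s8 hr hs hp.1 hp.2 hd
  rw [dist_comm, dist_eq_norm] at hle hd
  rw [← ofReal_norm, ← ofReal_norm (p - _), ← ENNReal.ofReal_inv_of_pos hd,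
    ← ENNReal.ofReal_ofNat, ← ENNReal.ofReal_mul (by norm_num)]
  exact ENNReal.ofReal_le_ofReal hle

lemma enorm_Fs_le (hr : 0 ≤ r) (hs : 0 ≤ s) {p : ℝ × ℝ} (hp : p ∈ quadrant) :
    ‖Fs r s p.1 p.2‖ₑ ≤ 52 * ‖p - (r, s)‖ₑ⁻¹ := by
  have hswap : ‖p.swap - (s, r)‖ₑ = ‖p - (r, s)‖ₑ := by
    rw [← ofReal_norm, ← ofReal_norm (p - _), Prod.norm_def, Prod.norm_def, max_comm]
    rfl
  rw [← hswap]
  exact enorm_Fr_le (p := p.swap) hs hr ⟨hp.2, hp.1⟩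

lemma measurable_Fr (r s : ℝ) : Measurable fun p : ℝ × ℝ ↦ Fr r s p.1 p.2 := by
  have hintegrand : Measurable fun q : ((ℝ × ℝ) × ℝ) × ℝ ↦
      q.1.1.1 * q.1.1.2 * cos q.1.2 * (q.1.1.2 - s * cos q.2) /
        Xmm r s q.1.1.1 q.1.1.2 q.1.2 q.2 ^ 2 := by
    unfold Xmm
    fun_prop
  simp only [Fr, intervalIntegral.integral_of_le pi_pos.le]
  exact (hintegrand.stronglyMeasurable.integral_prod_right'.integral_prod_right'
    |>.measurable.const_mul _)

lemma measurable_Fs (r s : ℝ) : Measurable fun p : ℝ × ℝ ↦ Fs r s p.1 p.2 :=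
  (measurable_Fr s r).comp measurable_swap

end Kernel

section Velocity

lemma volume_ball_zero_one_prod : volume (ball (0 : ℝ × ℝ) 1) = 4 := by
  rw [← Prod.mk_zero_zero, ← ball_prod_same, Measure.volume_eq_prod, Measure.prod_prod,
    Real.volume_ball, mul_one, ENNReal.ofReal_ofNat]
  norm_num

lemma lintegral_mul_inv_enorm_sub_le {ν : Measure (ℝ × ℝ)} (hν : ν ≤ volume)
    {f : ℝ × ℝ → ℝ≥0∞} {N I : ℝ≥0} (hf : ∀ᵐ p ∂ν, f p ≤ N * ‖p‖ₑ ^ 2)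
    (hI : ∫⁻ p, ‖p‖ₑ ^ 2 * f p ∂ν ≤ I) (x : ℝ × ℝ) :
    ∫⁻ p, f p * ‖p - x‖ₑ⁻¹ ∂ν ≤ 2 * NNReal.sqrt (N * 200 * I) := by
  have hdim : Module.finrank ℝ (ℝ × ℝ) = 2 := by simp
  have hA : 2 * (4 ^ (2 : ℝ) + 3 ^ Module.finrank ℝ (ℝ × ℝ)) * volume (ball (0 : ℝ × ℝ) 1) ≤
      (200 : ℝ≥0) := by
    rw [hdim, volume_ball_zero_one_prod, ENNReal.rpow_ofNat]
    norm_num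
  have hbound := lintegral_mul_enorm_sub_rpow_le volume hν zero_le_two hA
    (by simpa only [ENNReal.rpow_ofNat] using hf) (by simpa only [ENNReal.rpow_ofNat] using hI) x
  simpa only [hdim, Nat.cast_ofNat, div_self_eq_one₀.2 (two_ne_zero (α := ℝ)),
    ENNReal.rpow_neg_one] using hbound

lemma norm_sq_le_fst_sq_add_snd_sq (p : ℝ × ℝ) : ‖p‖ ^ 2 ≤ p.1 ^ 2 + p.2 ^ 2 := by
  rcases max_choice ‖p.1‖ ‖p.2‖ with h | h <;> rw [Prod.norm_def, h, Real.norm_eq_abs, sq_abs]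
  · exact le_add_of_nonneg_right (sq_nonneg _)
  · exact le_add_of_nonneg_left (sq_nonneg _)

lemma fst_sq_add_snd_sq_le_two_mul_norm_sq (p : ℝ × ℝ) : p.1 ^ 2 + p.2 ^ 2 ≤ 2 * ‖p‖ ^ 2 := by
  rw [two_mul]
  exact add_le_add (sq_le_sq.2 (by simpa using norm_fst_le p))
    (sq_le_sq.2 (by simpa using norm_snd_le p))

lemma lintegral_enorm_mul_inv_enorm_sub_le {ν : Measure (ℝ × ℝ)} (hν : ν ≤ volume)
    {w : ℝ × ℝ → ℝ} {N I : ℝ≥0} (hw : ∀ᵐ p ∂ν, |w p| ≤ N * (p.1 ^ 2 + p.2 ^ 2))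
    (hI : ∫⁻ p, ENNReal.ofReal ((p.1 ^ 2 + p.2 ^ 2) * |w p|) ∂ν ≤ I) (x : ℝ × ℝ) :
    ∫⁻ p, ‖w p‖ₑ * ‖p - x‖ₑ⁻¹ ∂ν ≤ 40 * NNReal.sqrt (I * N) := by
  have hf : ∀ᵐ p ∂ν, ‖w p‖ₑ ≤ (2 * N : ℝ≥0) * ‖p‖ₑ ^ 2 := by
    refine hw.mono fun p hp ↦ ?_
    simp only [enorm]
    norm_cast
    rw [← NNReal.coe_le_coe]
    push_cast
    calc ‖w p‖ ≤ N * (2 * ‖p‖ ^ 2) := by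
          grw [← fst_sq_add_snd_sq_le_two_mul_norm_sq]
          exact hp
      _ = 2 * N * ‖p‖ ^ 2 := by ring
  have hmoment : ∫⁻ p, ‖p‖ₑ ^ 2 * ‖w p‖ₑ ∂ν ≤ I := by
    refine (lintegral_mono fun p ↦ ?_).trans hI
    rw [← ofReal_norm, ← ofReal_norm (w p), ← ENNReal.ofReal_pow (norm_nonneg p),
      ← ENNReal.ofReal_mul (by positivity), Real.norm_eq_abs (w p)]
    grw [norm_sq_le_fst_sq_add_snd_sq]
  have hconst : NNReal.sqrt (2 * N * 200 * I) = 20 * NNReal.sqrt (I * N) := by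
    rw [← NNReal.sqrt_sq 20, ← NNReal.sqrt_mul]
    congr 1
    ring
  calc ∫⁻ p, ‖w p‖ₑ * ‖p - x‖ₑ⁻¹ ∂ν ≤ 2 * NNReal.sqrt (2 * N * 200 * I) :=
        lintegral_mul_inv_enorm_sub_le hν hf hmoment x
    _ = 40 * NNReal.sqrt (I * N) := by
        rw [hconst, ENNReal.coe_mul, ← mul_assoc]
        norm_num

lemma measurableSet_quadrant : MeasurableSet quadrant :=
  measurableSet_Ici.prod measurableSet_Ici

lemma lintegral_enorm_kernel_mul_le {ν : Measure (ℝ × ℝ)} (hν : ν ≤ volume)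
    {K w : ℝ × ℝ → ℝ} {c N I : ℝ≥0} {x : ℝ × ℝ} (hK : ∀ᵐ p ∂ν, ‖K p‖ₑ ≤ c * ‖p - x‖ₑ⁻¹)
    (hw : ∀ᵐ p ∂ν, |w p| ≤ N * (p.1 ^ 2 + p.2 ^ 2))
    (hI : ∫⁻ p, ENNReal.ofReal ((p.1 ^ 2 + p.2 ^ 2) * |w p|) ∂ν ≤ I) :
    ∫⁻ p, ‖K p * w p‖ₑ ∂ν ≤ (c * (40 * NNReal.sqrt (I * N)) : ℝ≥0) := by
  calc ∫⁻ p, ‖K p * w p‖ₑ ∂ν ≤ ∫⁻ p, c * (‖w p‖ₑ * ‖p - x‖ₑ⁻¹) ∂ν := by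
        refine lintegral_mono_ae (hK.mono fun p hp ↦ ?_)
        rw [enorm_mul, mul_comm ‖w p‖ₑ, ← mul_assoc]
        gcongr
    _ = c * ∫⁻ p, ‖w p‖ₑ * ‖p - x‖ₑ⁻¹ ∂ν := lintegral_const_mul' _ _ ENNReal.coe_ne_top
    _ ≤ c * (40 * NNReal.sqrt (I * N)) := by
        grw [lintegral_enorm_mul_inv_enorm_sub_le hν hw hI x]
    _ = (c * (40 * NNReal.sqrt (I * N)) : ℝ≥0) := by push_cast; rfl

lemma integrable_kernel_mul_and_abs_integral_le {ν : Measure (ℝ × ℝ)} (hν : ν ≤ volume)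
    {K w : ℝ × ℝ → ℝ} {c N I : ℝ≥0} {x : ℝ × ℝ} (hKm : AEMeasurable K ν) (hwm : AEMeasurable w ν)
    (hK : ∀ᵐ p ∂ν, ‖K p‖ₑ ≤ c * ‖p - x‖ₑ⁻¹)
    (hw : ∀ᵐ p ∂ν, |w p| ≤ N * (p.1 ^ 2 + p.2 ^ 2))
    (hI : ∫⁻ p, ENNReal.ofReal ((p.1 ^ 2 + p.2 ^ 2) * |w p|) ∂ν ≤ I) :
    Integrable (fun p ↦ K p * w p) ν ∧ |∫ p, K p * w p ∂ν| ≤ 40 * c * √I * √N := by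
  have hbound := lintegral_enorm_kernel_mul_le hν hK hw hI
  refine ⟨⟨(hKm.mul hwm).aestronglyMeasurable,
    hbound.trans_lt ENNReal.coe_lt_top⟩, ?_⟩
  have hnnnorm := (enorm_integral_le_lintegral_enorm _).trans hbound
  rw [enorm_le_coe, ← NNReal.coe_le_coe, coe_nnnorm, Real.norm_eq_abs] at hnnnorm
  refine hnnnorm.trans_eq ?_
  push_cast
  rw [Real.sqrt_mul I.coe_nonneg]
  ring

end Velocity

theorem stmt_8_general {w : ℝ × ℝ → ℝ} {N I : ℝ≥0} (hwm : AEMeasurable w (volume.restrict quadrant))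
    (hw : ∀ᵐ p ∂(volume.restrict quadrant), |w p| ≤ N * (p.1 ^ 2 + p.2 ^ 2))
    (hI : ∫⁻ p in quadrant, ENNReal.ofReal ((p.1 ^ 2 + p.2 ^ 2) * |w p|) ≤ I)
    {r s : ℝ} (hr : 0 ≤ r) (hs : 0 ≤ s) :
    IntegrableOn (fun p : ℝ × ℝ ↦ Fr r s p.1 p.2 * w p) quadrant ∧
      IntegrableOn (fun p : ℝ × ℝ ↦ Fs r s p.1 p.2 * w p) quadrant ∧
      max |uR w r s| |uS w r s| ≤ 2080 * √I * √N := by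
  have hquadrant {P : ℝ × ℝ → Prop} (hP : ∀ p ∈ quadrant, P p) :
      ∀ᵐ p ∂(volume.restrict quadrant), P p :=
    ae_restrict_of_forall_mem measurableSet_quadrant hP
  obtain ⟨hFr, huR⟩ := integrable_kernel_mul_and_abs_integral_le (c := 52) Measure.restrict_le_self
    (measurable_Fr r s).aemeasurable hwm (hquadrant fun p ↦ enorm_Fr_le hr hs) hw hI
  obtain ⟨hFs, huS⟩ := integrable_kernel_mul_and_abs_integral_le (c := 52) Measure.restrict_le_self
    (measurable_Fs r s).aemeasurable hwm (hquadrant fun p ↦ enorm_Fs_le hr hs) hw hI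
  have hconst : (40 * (52 : ℝ≥0) : ℝ) = 2080 := by norm_num
  rw [hconst] at huR huS
  exact ⟨hFr, hFs, max_le (by rwa [uR, abs_neg]) huS⟩

/-- There is an absolute constant `C > 0` such that: if `w` is measurable,
`|w(r̄,s̄)| ≤ N r̄ s̄` a.e. on `Π`, and `∫∫_Π (r̄² + s̄²)|w| = I < ∞`, then for every
`(r,s) ∈ Π` the integrals defining `u^r[w](r,s)` and `u^s[w](r,s)` converge absolutely,
and `sup_{(r,s) ∈ Π} max{|u^r[w](r,s)|, |u^s[w](r,s)|} ≤ C I^{1/2} N^{1/2}`. -/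
theorem stmt_8 :
    ∃ C : ℝ, 0 < C ∧
      ∀ (w : ℝ × ℝ → ℝ) (N I : ℝ), Measurable w → 0 ≤ N → 0 ≤ I →
        (∀ᵐ p ∂(volume.restrict quadrant), |w p| ≤ N * (p.1 * p.2)) →
        (∫⁻ p in quadrant, ENNReal.ofReal ((p.1 ^ 2 + p.2 ^ 2) * |w p|))
          = ENNReal.ofReal I →
        ∀ r s : ℝ, 0 ≤ r → 0 ≤ s →
          IntegrableOn (fun p : ℝ × ℝ => Fr r s p.1 p.2 * w p) quadrant ∧
          IntegrableOn (fun p : ℝ × ℝ => Fs r s p.1 p.2 * w p) quadrant ∧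
          max |uR w r s| |uS w r s| ≤ C * Real.sqrt I * Real.sqrt N := by
  refine ⟨2080, by norm_num, fun w N I hwm hN hI hw hmoment r s hr hs ↦ ?_⟩
  lift N to ℝ≥0 using hN
  lift I to ℝ≥0 using hI
  have hmul (p : ℝ × ℝ) : p.1 * p.2 ≤ p.1 ^ 2 + p.2 ^ 2 := by
    nlinarith [sq_nonneg (p.1 - p.2), sq_nonneg p.1, sq_nonneg p.2]
  exact stmt_8_general hwm.aemeasurable
    (hw.mono fun p hp ↦ hp.trans (mul_le_mul_of_nonneg_left (hmul p) N.coe_nonneg))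
    (hmoment.trans ENNReal.ofReal_coe_nnreal).le hr hs
end

section
/- There exists an absolute constant C > 0 such that for every measurable w : Π → ℝ and every (r, s) ∈ Π, one has ∫∫_Π |F^r(r, s, r̄, s̄)| |w(r̄, s̄)| ds̄ dr̄ ≤ C Λ(W) and ∫∫_Π |F^s(r, s, r̄, s̄)| |w(r̄, s̄)| ds̄ dr̄ ≤ C Λ(W); in particular, if Λ(W) < ∞ then |u^r[w](r, s)| ≤ C Λ(W) and |u^s[w](r, s)| ≤ C Λ(W) for all (r, s) ∈ Π. -/
open MeasureTheory Real ENNReal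

/-- `r_x = √(x₁² + x₂²)` for `x ∈ ℝ⁴`. -/
noncomputable def rx (x : Fin 4 → ℝ) : ℝ := Real.sqrt ((x 0) ^ 2 + (x 1) ^ 2)

/-- `s_x = √(x₃² + x₄²)` for `x ∈ ℝ⁴`. -/
noncomputable def sx (x : Fin 4 → ℝ) : ℝ := Real.sqrt ((x 2) ^ 2 + (x 3) ^ 2)

/-- `Λ(f) = ∫₀^∞ (vol{x ∈ ℝ⁴ : |f(x)| > λ})^{1/4} dλ`, comparable to the
Lorentz `L^{4,1}(ℝ⁴)` norm of `f`. -/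
noncomputable def Lam (f : (Fin 4 → ℝ) → ℝ) : ℝ≥0∞ :=
  ∫⁻ l in Set.Ioi (0:ℝ), (volume {x : Fin 4 → ℝ | l < |f x|}) ^ ((1:ℝ)/4)

/-!
`X₋₋` is the squared distance in `ℝ⁴` from `x = (r, 0, s, 0)` to a point `y` with polar
coordinates `(r̄, θ̄)`, `(s̄, φ̄)` in the two coordinate planes, and `|s̄ - s cos φ̄| ≤ √X₋₋`.
Hence both kernels are dominated by `r̄ s̄ |x - y|⁻³` integrated over the angles. Since `r̄ s̄` is
the Jacobian of the polar coordinates, both integrals are dominated by the potential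
`∫ |x - y|⁻³ |W(y)| dy`; here the Euclidean distance may be replaced by the smaller sup norm
distance of `Fin 4 → ℝ`. The function `|x - y|⁻³` lies in `L^{4/3,∞}(ℝ⁴)`, whose duality with
`L^{4,1}(ℝ⁴)` is elementary: by the layer-cake formula it reduces to the bound
`∫_A |x - y|⁻³ dy ≲ vol(A)^{1/4}` for the superlevel sets `A` of `|W|`.
-/

section WeakType

variable {α : Type*} [MeasurableSpace α] {μ : Measure α} {g : α → ℝ} {p q K : ℝ}

/-- `g` belongs to the weak Lebesgue space `L^{p,∞}(μ)`, quantitatively: its distribution function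
is at most `K t^{-p}`. Only the positive part of `g` is controlled. -/
def WeakLpBound (g : α → ℝ) (p K : ℝ) (μ : Measure α) : Prop :=
  ∀ t : ℝ, 0 < t → μ {x | t < g x} ≤ ENNReal.ofReal (K * t ^ (-p))

/-- The Lorentz functional `∫₀^∞ μ{|f| > l}^{1/q} dl`, comparable to the norm of `L^{q,1}(μ)`;
the exponent is written `1 / q` as in `Lam`. -/
noncomputable def lorentzOne (f : α → ℝ) (q : ℝ) (μ : Measure α) : ℝ≥0∞ :=
  ∫⁻ l in Set.Ioi (0 : ℝ), μ {x | l < |f x|} ^ (1 / q)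

lemma Lam_eq_lorentzOne (f : (Fin 4 → ℝ) → ℝ) : Lam f = lorentzOne f 4 volume := rfl

lemma setLIntegral_ofReal_le_mul_add_lintegral_meas_lt (hg0 : 0 ≤ g) (hg : Measurable g) {T : ℝ}
    (hT : 0 ≤ T) (A : Set α) :
    ∫⁻ x in A, ENNReal.ofReal (g x) ∂μ
      ≤ ENNReal.ofReal T * μ A + ∫⁻ t in Set.Ioi T, μ {x | t < g x} := by
  rw [lintegral_eq_lintegral_meas_lt _ (ae_of_all _ hg0) hg.aemeasurable,
    ← Set.Ioc_union_Ioi_eq_Ioi hT]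
  refine (lintegral_union_le _ _ _).trans (add_le_add ?_ ?_)
  · calc ∫⁻ t in Set.Ioc 0 T, (μ.restrict A) {x | t < g x}
        ≤ ∫⁻ _ in Set.Ioc 0 T, μ A :=
          lintegral_mono fun t => (measure_mono (Set.subset_univ _)).trans_eq (by simp)
      _ = ENNReal.ofReal T * μ A := by
          rw [setLIntegral_const, Real.volume_Ioc, sub_zero, mul_comm]
  · exact lintegral_mono fun t => Measure.restrict_apply_le _ _

lemma WeakLpBound.lintegral_Ioi_meas_lt_le (h : WeakLpBound g p K μ) (hp : 1 < p) (hK : 0 ≤ K)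
    {T : ℝ} (hT : 0 < T) :
    ∫⁻ t in Set.Ioi T, μ {x | t < g x} ≤ ENNReal.ofReal (K * (T ^ (1 - p) / (p - 1))) := by
  have hint : IntegrableOn (fun t : ℝ => K * t ^ (-p)) (Set.Ioi T) :=
    (integrableOn_Ioi_rpow_of_lt (by linarith) hT).const_mul K
  calc ∫⁻ t in Set.Ioi T, μ {x | t < g x}
      ≤ ∫⁻ t in Set.Ioi T, ENNReal.ofReal (K * t ^ (-p)) :=
        setLIntegral_mono' measurableSet_Ioi fun t ht => h t (hT.trans ht)
    _ = ENNReal.ofReal (∫ t in Set.Ioi T, K * t ^ (-p)) :=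
        (ofReal_integral_eq_lintegral_ofReal hint <|
          ae_restrict_of_forall_mem measurableSet_Ioi fun t ht =>
            mul_nonneg hK (rpow_nonneg (hT.trans ht).le _)).symm
    _ = ENNReal.ofReal (K * (T ^ (1 - p) / (p - 1))) := by
        rw [integral_const_mul, integral_Ioi_rpow_of_lt (by linarith) hT, neg_div, ← div_neg]
        ring_nf

/-- The two quantities are the head and the tail of the bound `T m + ∫_T^∞ K t^{-p} dt` for the
integral of a weak-`L^p` function over a set of measure `m`, at the height where
`m = K T^{-p}`. -/
lemma exists_balanced_truncation (hpq : p.HolderConjugate q) (hK : 0 < K) {m : ℝ} (hm : 0 < m) :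
    ∃ T : ℝ, 0 < T ∧ T * m = K ^ (1 / p) * m ^ (1 / q) ∧
      K * (T ^ (1 - p) / (p - 1)) = (q - 1) * (K ^ (1 / p) * m ^ (1 / q)) := by
  set T := (K / m) ^ (1 / p) with hT
  have hT0 : 0 < T := by positivity
  have hTm : T * m = K ^ (1 / p) * m ^ (1 / q) := by
    rw [hT, div_rpow hK.le hm.le, one_div q, ← hpq.one_sub_inv, rpow_sub hm, Real.rpow_one, one_div]
    ring
  have hTp : T ^ p = K / m := by
    rw [hT, ← rpow_mul (by positivity), one_div_mul_cancel hpq.ne_zero, Real.rpow_one]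
  have hconj : (q - 1) * (p - 1) = 1 := by linear_combination hpq.mul_eq_add
  refine ⟨T, hT0, hTm, ?_⟩
  have hp1 := hpq.sub_one_ne_zero
  rw [← hTm, rpow_sub hT0, Real.rpow_one, hTp]
  field_simp
  linear_combination -hconj

theorem WeakLpBound.setLIntegral_le (h : WeakLpBound g p K μ) (hpq : p.HolderConjugate q)
    (hK : 0 < K) (hg0 : 0 ≤ g) (hg : Measurable g) (A : Set α) :
    ∫⁻ x in A, ENNReal.ofReal (g x) ∂μ ≤ ENNReal.ofReal (q * K ^ (1 / p)) * μ A ^ (1 / q) := by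
  have hq : 0 < q := hpq.symm.pos
  have hq1 : 0 < q - 1 := hpq.symm.sub_one_pos
  rcases eq_or_ne (μ A) 0 with hA0 | hA0
  · simp [Measure.restrict_eq_zero.2 hA0]
  rcases eq_or_ne (μ A) ∞ with hA | hA
  · rw [hA, ENNReal.top_rpow_of_pos (by positivity),
      ENNReal.mul_top (ENNReal.ofReal_pos.2 (by positivity)).ne']
    exact le_top
  have hm : 0 < μ.real A := ENNReal.toReal_pos hA0 hA
  obtain ⟨T, hT, hhead, htail⟩ := exists_balanced_truncation hpq hK hm
  calc ∫⁻ x in A, ENNReal.ofReal (g x) ∂μ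
      ≤ ENNReal.ofReal T * μ A + ∫⁻ t in Set.Ioi T, μ {x | t < g x} :=
        setLIntegral_ofReal_le_mul_add_lintegral_meas_lt hg0 hg hT.le A
    _ ≤ ENNReal.ofReal (K ^ (1 / p) * μ.real A ^ (1 / q))
          + ENNReal.ofReal ((q - 1) * (K ^ (1 / p) * μ.real A ^ (1 / q))) := by
        rw [← hhead, ENNReal.ofReal_mul hT.le, ofReal_measureReal hA, hhead, ← htail]
        gcongr
        exact h.lintegral_Ioi_meas_lt_le hpq.lt hK.le hT
    _ = ENNReal.ofReal (q * K ^ (1 / p)) * μ A ^ (1 / q) := by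
        rw [← ENNReal.ofReal_add (by positivity) (by positivity), ← ofReal_measureReal hA,
          ENNReal.ofReal_rpow_of_pos hm, ← ENNReal.ofReal_mul (by positivity)]
        ring_nf

lemma lintegral_mul_ofReal_abs_eq_lintegral_setLIntegral {G : α → ℝ≥0∞} (hG : Measurable G)
    {f : α → ℝ} (hf : Measurable f) :
    ∫⁻ x, G x * ENNReal.ofReal |f x| ∂μ
      = ∫⁻ l in Set.Ioi (0 : ℝ), ∫⁻ x in {x | l < |f x|}, G x ∂μ := by
  have hf' : Measurable fun x => |f x| := hf.abs
  calc ∫⁻ x, G x * ENNReal.ofReal |f x| ∂μ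
      = ∫⁻ x, ENNReal.ofReal |f x| ∂μ.withDensity G :=
        (lintegral_withDensity_eq_lintegral_mul _ hG hf'.ennreal_ofReal).symm
    _ = ∫⁻ l in Set.Ioi (0 : ℝ), μ.withDensity G {x | l < |f x|} :=
        lintegral_eq_lintegral_meas_lt _ (ae_of_all _ fun _ => abs_nonneg _) hf'.aemeasurable
    _ = ∫⁻ l in Set.Ioi (0 : ℝ), ∫⁻ x in {x | l < |f x|}, G x ∂μ :=
        lintegral_congr fun _ => withDensity_apply _ (measurableSet_lt measurable_const hf')

theorem WeakLpBound.lintegral_mul_le_lorentzOne (h : WeakLpBound g p K μ)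
    (hpq : p.HolderConjugate q) (hK : 0 < K) (hg0 : 0 ≤ g) (hg : Measurable g) {f : α → ℝ}
    (hf : Measurable f) :
    ∫⁻ x, ENNReal.ofReal (g x) * ENNReal.ofReal |f x| ∂μ
      ≤ ENNReal.ofReal (q * K ^ (1 / p)) * lorentzOne f q μ := by
  rw [lintegral_mul_ofReal_abs_eq_lintegral_setLIntegral hg.ennreal_ofReal hf, lorentzOne,
    ← lintegral_const_mul' _ _ ENNReal.ofReal_ne_top]
  exact lintegral_mono fun l => h.setLIntegral_le hpq hK hg0 hg _

end WeakType

section RieszPotential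

open Module

variable {E : Type*} [NormedAddCommGroup E] [NormedSpace ℝ E] [FiniteDimensional ℝ E]
  [Nontrivial E] [MeasurableSpace E] [BorelSpace E] (μ : Measure E) [μ.IsAddHaarMeasure] {p q : ℝ}

lemma weakLpBound_norm_sub_rpow_neg (hp : 0 < p) (x : E) :
    WeakLpBound (fun y => ‖y - x‖ ^ (-(finrank ℝ E / p))) p (μ.real (Metric.ball 0 1)) μ := by
  intro t ht
  have hd : (0 : ℝ) < finrank ℝ E := by exact_mod_cast finrank_pos
  set ρ := t ^ (-(p / finrank ℝ E)) with hρ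
  have hρ0 : 0 < ρ := by positivity
  have hsub : {y | t < ‖y - x‖ ^ (-(finrank ℝ E / p))} ⊆ Metric.ball x ρ := by
    intro y hy
    by_contra hfar
    rw [mem_ball_iff_norm, not_lt] at hfar
    refine (Set.mem_ofPred_eq ▸ hy : t < _).not_ge ?_
    calc ‖y - x‖ ^ (-(finrank ℝ E / p)) ≤ ρ ^ (-(finrank ℝ E / p)) :=
          rpow_le_rpow_of_nonpos hρ0 hfar (neg_nonpos.2 (by positivity))
      _ = t := by
          rw [hρ, ← rpow_mul ht.le]
          field_simp
          simp
  have hvol : ρ ^ finrank ℝ E = t ^ (-p) := by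
    rw [hρ, ← Real.rpow_natCast, ← rpow_mul ht.le]
    field_simp
  calc μ {y | t < ‖y - x‖ ^ (-(finrank ℝ E / p))}
      ≤ μ (Metric.ball x ρ) := measure_mono hsub
    _ = ENNReal.ofReal (μ.real (Metric.ball 0 1) * t ^ (-p)) := by
        rw [Measure.addHaar_ball μ x hρ0.le, hvol, mul_comm,
          ENNReal.ofReal_mul measureReal_nonneg, ofReal_measureReal measure_ball_lt_top.ne]

theorem lintegral_norm_sub_rpow_mul_le_lorentzOne (hpq : p.HolderConjugate q) (x : E) {f : E → ℝ}
    (hf : Measurable f) :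
    ∫⁻ y, ENNReal.ofReal (‖y - x‖ ^ (-(finrank ℝ E / p))) * ENNReal.ofReal |f y| ∂μ
      ≤ ENNReal.ofReal (q * μ.real (Metric.ball 0 1) ^ (1 / p)) * lorentzOne f q μ :=
  (weakLpBound_norm_sub_rpow_neg μ hpq.pos x).lintegral_mul_le_lorentzOne hpq
    (ENNReal.toReal_pos (Metric.measure_ball_pos μ 0 one_pos).ne' measure_ball_lt_top.ne)
    (fun _ => by positivity) (by fun_prop) hf

end RieszPotential

section BipolarCoordinates

/-- The point of `ℝ⁴ = ℝ² × ℝ²` with polar coordinates `(ρ, θ)` in the first plane and `(σ, φ)` in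
the second. -/
noncomputable def bipolar (ρ σ θ φ : ℝ) : Fin 4 → ℝ :=
  ![ρ * Real.cos θ, ρ * Real.sin θ, σ * Real.cos φ, σ * Real.sin φ]

lemma sqrt_mul_cos_sq_add_mul_sin_sq {ρ : ℝ} (hρ : 0 ≤ ρ) (θ : ℝ) :
    √((ρ * Real.cos θ) ^ 2 + (ρ * Real.sin θ) ^ 2) = ρ := by
  rw [mul_pow, mul_pow, ← mul_add, Real.cos_sq_add_sin_sq, mul_one, Real.sqrt_sq hρ]

lemma rx_bipolar {ρ : ℝ} (hρ : 0 ≤ ρ) (σ θ φ : ℝ) : rx (bipolar ρ σ θ φ) = ρ :=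
  sqrt_mul_cos_sq_add_mul_sin_sq hρ θ

lemma sx_bipolar (ρ : ℝ) {σ : ℝ} (hσ : 0 ≤ σ) (θ φ : ℝ) : sx (bipolar ρ σ θ φ) = σ :=
  sqrt_mul_cos_sq_add_mul_sin_sq hσ φ

lemma measurable_rx : Measurable rx := by unfold rx; fun_prop

lemma measurable_sx : Measurable sx := by unfold sx; fun_prop

lemma lintegral_eq_lintegral_polar {h : ℝ × ℝ → ℝ≥0∞} (hh : Measurable h) :
    ∫⁻ z, h z = ∫⁻ ρ in Set.Ici (0 : ℝ), ∫⁻ θ in Set.Ioo (-π) π,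
      ENNReal.ofReal ρ * h (ρ * Real.cos θ, ρ * Real.sin θ) := by
  rw [← lintegral_comp_polarCoord_symm, polarCoord_target, Measure.volume_eq_prod,
    ← Measure.prod_restrict, lintegral_prod _ (by
      simp only [polarCoord_symm_apply, smul_eq_mul]; fun_prop),
    setLIntegral_congr Ioi_ae_eq_Ici]
  simp only [polarCoord_symm_apply, smul_eq_mul]

lemma measurePreserving_finFour_planes :
    MeasurePreserving fun x : Fin 4 → ℝ => ((x 0, x 1), (x 2, x 3)) := by
  have hsplit := volume_measurePreserving_sumPiEquivProdPi fun _ : Fin 2 ⊕ Fin 2 => ℝ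
  have hreindex := (volume_measurePreserving_piCongrLeft (fun _ : Fin 4 => ℝ)
    (finSumFinEquiv (m := 2) (n := 2))).symm
  have hplanes := (volume_preserving_finTwoArrow ℝ).prod (volume_preserving_finTwoArrow ℝ)
  exact hplanes.comp (hsplit.comp hreindex)

theorem lintegral_eq_lintegral_bipolar {G : (Fin 4 → ℝ) → ℝ≥0∞} (hG : Measurable G) :
    ∫⁻ x, G x = ∫⁻ p in quadrant, ∫⁻ θ in Set.Ioo (-π) π, ∫⁻ φ in Set.Ioo (-π) π,
      ENNReal.ofReal p.1 * (ENNReal.ofReal p.2 * G (bipolar p.1 p.2 θ φ)) := by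
  set H : (ℝ × ℝ) × (ℝ × ℝ) → ℝ≥0∞ := fun z => G ![z.1.1, z.1.2, z.2.1, z.2.2]
  have hH : Measurable H := hG.comp <| Continuous.measurable <| by fun_prop
  have hbipolar (ρ σ θ φ : ℝ) : G (bipolar ρ σ θ φ)
      = H ((ρ * Real.cos θ, ρ * Real.sin θ), (σ * Real.cos φ, σ * Real.sin φ)) := rfl
  simp_rw [hbipolar]
  calc ∫⁻ x, G x
      = ∫⁻ x : Fin 4 → ℝ, H ((x 0, x 1), (x 2, x 3)) := by
        refine lintegral_congr fun x => congrArg G ?_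
        ext i
        fin_cases i <;> rfl
    _ = ∫⁻ a, ∫⁻ b, H (a, b) := by
        rw [measurePreserving_finFour_planes.lintegral_comp hH, Measure.volume_eq_prod,
          lintegral_prod _ hH.aemeasurable]
    _ = ∫⁻ ρ in Set.Ici (0 : ℝ), ∫⁻ θ in Set.Ioo (-π) π, ∫⁻ σ in Set.Ici (0 : ℝ),
          ∫⁻ φ in Set.Ioo (-π) π, ENNReal.ofReal ρ * (ENNReal.ofReal σ *
            H ((ρ * Real.cos θ, ρ * Real.sin θ), (σ * Real.cos φ, σ * Real.sin φ))) := by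
        rw [lintegral_eq_lintegral_polar (by fun_prop)]
        refine lintegral_congr fun ρ => lintegral_congr fun θ => ?_
        rw [lintegral_eq_lintegral_polar (by fun_prop)]
        simp_rw [lintegral_const_mul' _ _ (ENNReal.ofReal_ne_top (r := _))]
    _ = ∫⁻ ρ in Set.Ici (0 : ℝ), ∫⁻ σ in Set.Ici (0 : ℝ), ∫⁻ θ in Set.Ioo (-π) π,
          ∫⁻ φ in Set.Ioo (-π) π, ENNReal.ofReal ρ * (ENNReal.ofReal σ *
            H ((ρ * Real.cos θ, ρ * Real.sin θ), (σ * Real.cos φ, σ * Real.sin φ))) :=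
        lintegral_congr fun ρ => lintegral_lintegral_swap (by fun_prop)
    _ = ∫⁻ p in quadrant, ∫⁻ θ in Set.Ioo (-π) π, ∫⁻ φ in Set.Ioo (-π) π,
          ENNReal.ofReal p.1 * (ENNReal.ofReal p.2 *
            H ((p.1 * Real.cos θ, p.1 * Real.sin θ), (p.2 * Real.cos φ, p.2 * Real.sin φ))) := by
        rw [quadrant, Measure.volume_eq_prod, ← Measure.prod_restrict,
          lintegral_prod _ (by fun_prop)]

end BipolarCoordinates

lemma enorm_intervalIntegral_le_lintegral_Ioo_neg {E : Type*} [NormedAddCommGroup E]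
    [NormedSpace ℝ E] {a : ℝ} (ha : 0 ≤ a) (f : ℝ → E) :
    ‖∫ t in (0 : ℝ)..a, f t‖ₑ ≤ ∫⁻ t in Set.Ioo (-a) a, ‖f t‖ₑ := by
  rw [intervalIntegral.integral_of_le ha, integral_Ioc_eq_integral_Ioo]
  exact (enorm_integral_le_lintegral_enorm f).trans
    (lintegral_mono_set (Set.Ioo_subset_Ioo_left (neg_nonpos.2 ha)))

section BiotSavartKernel

variable (r s ρ σ θ φ : ℝ)

lemma Xmm_eq_sum_sq :
    Xmm r s ρ σ θ φ = ∑ i, (bipolar ρ σ θ φ - bipolar r s 0 0) i ^ 2 := by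
  simp only [Xmm, bipolar, Fin.sum_univ_four, Pi.sub_apply, Matrix.cons_val, Real.cos_zero,
    Real.sin_zero]
  linear_combination (-ρ ^ 2) * Real.sin_sq_add_cos_sq θ - σ ^ 2 * Real.sin_sq_add_cos_sq φ

lemma Xmm_nonneg : 0 ≤ Xmm r s ρ σ θ φ := by
  rw [Xmm_eq_sum_sq]
  positivity

lemma Xmm_swap : Xmm s r σ ρ φ θ = Xmm r s ρ σ θ φ := by
  unfold Xmm
  ring

lemma sq_sub_mul_cos_le_Xmm : (σ - s * Real.cos φ) ^ 2 ≤ Xmm r s ρ σ θ φ := by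
  have hdecomp : Xmm r s ρ σ θ φ = (ρ * Real.cos θ - r) ^ 2 + (ρ * Real.sin θ) ^ 2
      + (σ - s * Real.cos φ) ^ 2 + (s * Real.sin φ) ^ 2 := by
    unfold Xmm
    linear_combination (-ρ ^ 2) * Real.sin_sq_add_cos_sq θ - s ^ 2 * Real.sin_sq_add_cos_sq φ
  rw [hdecomp]
  linarith [sq_nonneg (ρ * Real.cos θ - r), sq_nonneg (ρ * Real.sin θ),
    sq_nonneg (s * Real.sin φ)]

lemma norm_bipolar_sub_sq_le_Xmm : ‖bipolar ρ σ θ φ - bipolar r s 0 0‖ ^ 2 ≤ Xmm r s ρ σ θ φ := by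
  rw [← Real.le_sqrt (norm_nonneg _) (Xmm_nonneg ..), Xmm_eq_sum_sq,
    pi_norm_le_iff_of_nonneg (Real.sqrt_nonneg _)]
  exact fun i => Real.abs_le_sqrt <|
    Finset.single_le_sum (f := fun i => (bipolar ρ σ θ φ - bipolar r s 0 0) i ^ 2)
      (fun _ _ => sq_nonneg _) (Finset.mem_univ i)

lemma Xmm_rpow_le_norm_rpow :
    Xmm r s ρ σ θ φ ^ (-(3 / 2) : ℝ) ≤ ‖bipolar ρ σ θ φ - bipolar r s 0 0‖ ^ (-3 : ℝ) := by
  rcases eq_or_ne (bipolar ρ σ θ φ - bipolar r s 0 0) 0 with h0 | h0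
  · rw [Xmm_eq_sum_sq, h0]
    norm_num [Real.zero_rpow]
  have hpos := norm_pos_iff.2 h0
  calc Xmm r s ρ σ θ φ ^ (-(3 / 2) : ℝ)
      ≤ (‖bipolar ρ σ θ φ - bipolar r s 0 0‖ ^ 2) ^ (-(3 / 2) : ℝ) :=
        rpow_le_rpow_of_nonpos (by positivity) (norm_bipolar_sub_sq_le_Xmm ..) (by norm_num)
    _ = ‖bipolar ρ σ θ φ - bipolar r s 0 0‖ ^ (-3 : ℝ) := by
        rw [← Real.rpow_natCast, ← rpow_mul hpos.le]
        norm_num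

variable {ρ σ} in
lemma abs_Fr_integrand_le_s9 (hρ : 0 ≤ ρ) (hσ : 0 ≤ σ) :
    |ρ * σ * Real.cos θ * (σ - s * Real.cos φ) / Xmm r s ρ σ θ φ ^ 2|
      ≤ ρ * (σ * Xmm r s ρ σ θ φ ^ (-(3 / 2) : ℝ)) := by
  have hnum := Real.abs_le_sqrt (sq_sub_mul_cos_le_Xmm r s ρ σ θ φ)
  have hX0 := Xmm_nonneg r s ρ σ θ φ
  set X := Xmm r s ρ σ θ φ
  rcases hX0.eq_or_lt with hX | hX
  · simp [← hX]
  calc |ρ * σ * Real.cos θ * (σ - s * Real.cos φ) / X ^ 2|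
      = ρ * σ * |Real.cos θ| * |σ - s * Real.cos φ| / X ^ 2 := by
        rw [abs_div, abs_mul, abs_mul, abs_mul, abs_of_nonneg hρ, abs_of_nonneg hσ,
          abs_of_nonneg (sq_nonneg X)]
    _ ≤ ρ * σ * 1 * √X / X ^ 2 := by
        gcongr
        exact Real.abs_cos_le_one θ
    _ = ρ * (σ * X ^ (-(3 / 2) : ℝ)) := by
        rw [show (-(3 / 2) : ℝ) = 1 / 2 - 2 by norm_num, rpow_sub hX, ← Real.sqrt_eq_rpow,
          Real.rpow_two]
        ring

/-- The kernel `|x - y|⁻³` of `ℝ⁴` with `x = bipolar r s 0 0`, integrated over the torus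
`{y : r_y = ρ, s_y = σ}` against its area element `ρσ dθ dφ`. -/
noncomputable def torusKernel : ℝ≥0∞ :=
  ∫⁻ θ in Set.Ioo (-π) π, ∫⁻ φ in Set.Ioo (-π) π,
    ENNReal.ofReal ρ * (ENNReal.ofReal σ *
      ENNReal.ofReal (Xmm r s ρ σ θ φ ^ (-(3 / 2) : ℝ)))

lemma torusKernel_swap : torusKernel s r σ ρ = torusKernel r s ρ σ := by
  unfold torusKernel
  rw [lintegral_lintegral_swap (by unfold Xmm; fun_prop)]
  simp_rw [Xmm_swap, mul_left_comm]

variable {ρ σ} in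
lemma ofReal_abs_Fr_le (hρ : 0 ≤ ρ) (hσ : 0 ≤ σ) :
    ENNReal.ofReal |Fr r s ρ σ| ≤ ENNReal.ofReal (2 / π ^ 2) * torusKernel r s ρ σ := by
  rw [Fr, abs_mul, abs_of_nonneg (by positivity), ENNReal.ofReal_mul (by positivity),
    ← Real.enorm_eq_ofReal_abs]
  gcongr
  refine (enorm_intervalIntegral_le_lintegral_Ioo_neg pi_pos.le _).trans ?_
  refine lintegral_mono fun θ => ?_
  refine (enorm_intervalIntegral_le_lintegral_Ioo_neg pi_pos.le _).trans ?_
  refine lintegral_mono fun φ => ?_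
  rw [Real.enorm_eq_ofReal_abs, ← ENNReal.ofReal_mul hσ, ← ENNReal.ofReal_mul hρ]
  exact ENNReal.ofReal_le_ofReal (abs_Fr_integrand_le_s9 r s θ φ hρ hσ)

variable {ρ σ} in
lemma ofReal_abs_Fs_le (hρ : 0 ≤ ρ) (hσ : 0 ≤ σ) :
    ENNReal.ofReal |Fs r s ρ σ| ≤ ENNReal.ofReal (2 / π ^ 2) * torusKernel r s ρ σ :=
  torusKernel_swap r s ρ σ ▸ ofReal_abs_Fr_le s r hσ hρ

end BiotSavartKernel

lemma lintegral_norm_sub_rpow_neg_three_mul_le_Lam (x : Fin 4 → ℝ) {f : (Fin 4 → ℝ) → ℝ}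
    (hf : Measurable f) :
    ∫⁻ y, ENNReal.ofReal (‖y - x‖ ^ (-3 : ℝ)) * ENNReal.ofReal |f y|
      ≤ ENNReal.ofReal 32 * Lam f := by
  have hpq : (4 / 3 : ℝ).HolderConjugate 4 := Real.holderConjugate_iff.2 (by norm_num)
  have hexp : -((Module.finrank ℝ (Fin 4 → ℝ) : ℝ) / (4 / 3)) = -3 := by norm_num
  have hconst : 4 * volume.real (Metric.ball (0 : Fin 4 → ℝ) 1) ^ (1 / (4 / 3) : ℝ) = 32 := by
    have hball : volume.real (Metric.ball (0 : Fin 4 → ℝ) 1) = 2 ^ (4 : ℝ) := by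
      rw [measureReal_def, Real.volume_pi_ball _ one_pos, ENNReal.toReal_ofReal (by positivity)]
      norm_num
    rw [hball, ← rpow_mul zero_le_two]
    norm_num
  simpa only [hexp, hconst, ← Lam_eq_lorentzOne] using
    lintegral_norm_sub_rpow_mul_le_lorentzOne volume hpq x hf

lemma lintegral_torusKernel_mul_le_Lam (r s : ℝ) {w : ℝ × ℝ → ℝ} (hw : Measurable w) :
    ∫⁻ p in quadrant, torusKernel r s p.1 p.2 * ENNReal.ofReal |w p|
      ≤ ENNReal.ofReal 32 * Lam (fun x => w (rx x, sx x)) := by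
  set W : (Fin 4 → ℝ) → ℝ := fun x => w (rx x, sx x)
  have hW : Measurable W := hw.comp (measurable_rx.prodMk measurable_sx)
  have hWp : ∀ p ∈ quadrant, ∀ θ φ, W (bipolar p.1 p.2 θ φ) = w p := fun p hp θ φ => by
    simp only [W, rx_bipolar hp.1, sx_bipolar _ hp.2, Prod.mk.eta]
  set G : (Fin 4 → ℝ) → ℝ≥0∞ := fun y =>
    ENNReal.ofReal (‖y - bipolar r s 0 0‖ ^ (-3 : ℝ)) * ENNReal.ofReal |W y|
  calc ∫⁻ p in quadrant, torusKernel r s p.1 p.2 * ENNReal.ofReal |w p|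
      ≤ ∫⁻ p in quadrant, ∫⁻ θ in Set.Ioo (-π) π, ∫⁻ φ in Set.Ioo (-π) π,
          ENNReal.ofReal p.1 * (ENNReal.ofReal p.2 * G (bipolar p.1 p.2 θ φ)) := by
        refine setLIntegral_mono' (measurableSet_Ici.prod measurableSet_Ici) fun p hp => ?_
        simp_rw [torusKernel, ← lintegral_mul_const' _ _ (ENNReal.ofReal_ne_top (r := |w p|)),
          mul_assoc, G, hWp p hp]
        gcongr
        exact Xmm_rpow_le_norm_rpow ..
    _ = ∫⁻ y, G y := (lintegral_eq_lintegral_bipolar (by fun_prop)).symm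
    _ ≤ ENNReal.ofReal 32 * Lam W := lintegral_norm_sub_rpow_neg_three_mul_le_Lam _ hW

lemma lintegral_mul_le_of_le_torusKernel {c r s : ℝ} (hc : 0 ≤ c) {F : ℝ → ℝ → ℝ}
    (hF : ∀ ρ σ, 0 ≤ ρ → 0 ≤ σ →
      ENNReal.ofReal |F ρ σ| ≤ ENNReal.ofReal c * torusKernel r s ρ σ)
    {w : ℝ × ℝ → ℝ} (hw : Measurable w) :
    ∫⁻ p in quadrant, ENNReal.ofReal (|F p.1 p.2| * |w p|)
      ≤ ENNReal.ofReal (c * 32) * Lam (fun x => w (rx x, sx x)) := by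
  calc ∫⁻ p in quadrant, ENNReal.ofReal (|F p.1 p.2| * |w p|)
      ≤ ∫⁻ p in quadrant, ENNReal.ofReal c *
          (torusKernel r s p.1 p.2 * ENNReal.ofReal |w p|) := by
        refine setLIntegral_mono' (measurableSet_Ici.prod measurableSet_Ici) fun p hp => ?_
        rw [ENNReal.ofReal_mul (abs_nonneg _), ← mul_assoc]
        gcongr
        exact hF _ _ hp.1 hp.2
    _ ≤ ENNReal.ofReal (c * 32) * Lam (fun x => w (rx x, sx x)) := by
        rw [lintegral_const_mul' _ _ ENNReal.ofReal_ne_top, ENNReal.ofReal_mul hc, mul_assoc]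
        gcongr
        exact lintegral_torusKernel_mul_le_Lam r s hw

lemma abs_integral_mul_le_of_lintegral_le {α : Type*} [MeasurableSpace α] {μ : Measure α}
    {f g : α → ℝ} {C : ℝ} (hC : 0 ≤ C) {L : ℝ≥0∞} (hL : L < ⊤)
    (h : ∫⁻ x, ENNReal.ofReal (|f x| * |g x|) ∂μ ≤ ENNReal.ofReal C * L) :
    |∫ x, f x * g x ∂μ| ≤ C * L.toReal := by
  have hbound : ENNReal.ofReal |∫ x, f x * g x ∂μ| ≤ ENNReal.ofReal (C * L.toReal) := by
    rw [ENNReal.ofReal_mul hC, ENNReal.ofReal_toReal hL.ne, ← Real.enorm_eq_ofReal_abs]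
    refine (enorm_integral_le_lintegral_enorm _).trans ?_
    simpa only [Real.enorm_eq_ofReal_abs, abs_mul] using h
  exact (ENNReal.ofReal_le_ofReal_iff (by positivity)).1 hbound

/-- There is an absolute constant `C > 0` such that for every measurable
`w : Π → ℝ` and every `(r,s) ∈ Π`, `∫∫_Π |F^r| |w| ≤ C Λ(W)` and
`∫∫_Π |F^s| |w| ≤ C Λ(W)`, where `W(x) = w(r_x, s_x)`; in particular, if `Λ(W) < ∞`
then `|u^r[w](r,s)| ≤ C Λ(W)` and `|u^s[w](r,s)| ≤ C Λ(W)`. -/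
theorem stmt_9 :
    ∃ C : ℝ, 0 < C ∧
      ∀ (w : ℝ × ℝ → ℝ), Measurable w → ∀ r s : ℝ, 0 ≤ r → 0 ≤ s →
        (∫⁻ p in quadrant, ENNReal.ofReal (|Fr r s p.1 p.2| * |w p|))
          ≤ ENNReal.ofReal C * Lam (fun x => w (rx x, sx x)) ∧
        (∫⁻ p in quadrant, ENNReal.ofReal (|Fs r s p.1 p.2| * |w p|))
          ≤ ENNReal.ofReal C * Lam (fun x => w (rx x, sx x)) ∧
        (Lam (fun x => w (rx x, sx x)) < ⊤ →
          |uR w r s| ≤ C * (Lam (fun x => w (rx x, sx x))).toReal ∧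
          |uS w r s| ≤ C * (Lam (fun x => w (rx x, sx x))).toReal) := by
  refine ⟨2 / π ^ 2 * 32, by positivity, fun w hw r s _ _ => ?_⟩
  have hFr := lintegral_mul_le_of_le_torusKernel (by positivity)
    (fun _ _ => ofReal_abs_Fr_le r s) hw
  have hFs := lintegral_mul_le_of_le_torusKernel (by positivity)
    (fun _ _ => ofReal_abs_Fs_le r s) hw
  refine ⟨hFr, hFs, fun hΛ => ⟨?_, abs_integral_mul_le_of_lintegral_le (by positivity) hΛ hFs⟩⟩
  rw [uR, abs_neg]
  exact abs_integral_mul_le_of_lintegral_le (by positivity) hΛ hFr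
end
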